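/- arXiv:2407.02426 — 2 statements merged into one kernel-verified Lean document; each statement's English description precedes it below -/
import Mathlib

section
/- Starting from the state (0, 2, 4, 0), the process never halts: for every m ≥ 0, the Halt rule does not apply to P^m((0, 2, 4, 0)), i.e., no iterate of (0, 2, 4, 0) under P is a state all of whose entries are even and whose two leftmost entries are both 0. -/
/-!
The trajectory is cut into rounds, each beginning at a state whose entries are all even, say
`2 * b 0, …, 2 * b (M + 3)` from right to left, with `M` even (`emb`). Inside a round, runs of
Increment steps act as a binary Gray-code counter: passing the counter value `n` changes the entry
whose index is one more than the 2-adic valuation of `n`. So the entries along a run are given by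
the numbers `r j n` of integers in `[1, n]` of valuation `j` (`reach_down`, `reach_up`), and a
whole round (one Zero step, two Halve steps, and three runs) has a closed form (`round_step`).
It depends on the two counters `x = b 0` and `w = 2 ^ (M + 1) + b 1`.

On the trajectory in question each round adds `1` to a single `b i`. The index `i` of this pulse
drops by `2` from round to round until the pulse reaches `x` or `w`. The counter reached is then
incremented, and the valuation of its new value determines the index at which the next pulse
starts: `v` if `x` was incremented to a value of valuation `v`, and `v + 1` if `w` was
(`Inv.regular`). Hence the parity of `i` says which counter is hit next, and it switches exactly
at odd valuations for either counter. With `q` counting the integers of odd valuation, this keeps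
`q w - q (2 ^ (M + 2))` within one of `q x`, so that `x` stays below `2 ^ (M + 2)` until `w`
reaches `2 ^ (M + 3)`, and at that time `x = 2 ^ (M + 2) - 2`. The pulse equation then determines
every `b j` (`Inv.values`), the round ends in an Overflow step (`Inv.overflow`), and the
resulting state satisfies the invariant with `M + 2` in place of `M` (`newB_inv`).

All states at the beginning of a round have `b (M + 2) ≥ 1`, so they do not halt, and there are
arbitrarily late rounds. Since a Halt state is fixed by `P`, no Halt state can occur.
-/

open scoped Classical

namespace Skelet17

/-- The five kinds of transition rules. -/
inductive Rule
  | overflow | halt | zero | halve | increment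
  deriving DecidableEq

/-- A state `(a_ℓ, …, a_1, a_0)` (written left to right, `a_0` rightmost) is stored
as the list `[a_0, a_1, …, a_ℓ]`, i.e. with the *rightmost* entry first. -/
abbrev State := List ℤ

/-- The leftmost entry `a_ℓ` of a state. -/
def leftmost (S : State) : ℤ := S.getLastD 0

/-- The entry `a_i(S)`. -/
def entry (S : State) (i : ℕ) : ℤ := S.getD i 0

/-- `ℓ(S) = |S| - 1`. -/
def ell (S : State) : ℕ := S.length - 1

/-- The Overflow rule applies: the leftmost entry is odd and all other entries are even. -/
def OverflowCond (S : State) : Prop := Odd (leftmost S) ∧ ∀ x ∈ S.dropLast, Even x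

/-- The Halt rule applies: all entries are even and the two leftmost entries are `0`. -/
def HaltCond (S : State) : Prop :=
  (∀ x ∈ S, Even x) ∧ S.getLastD 1 = 0 ∧ S.dropLast.getLastD 1 = 0

/-- The Zero rule applies: all entries are even and the Halt rule does not apply. -/
def ZeroCond (S : State) : Prop := (∀ x ∈ S, Even x) ∧ ¬ HaltCond S

/-- The Halve rule applies: `a_0 = -1` and none of the earlier rules applies. -/
def HalveCond (S : State) : Prop :=
  ¬ OverflowCond S ∧ ¬ HaltCond S ∧ ¬ ZeroCond S ∧ S.headD 0 = -1

/-- The rule applied to a state (the first matching rule). -/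
noncomputable def ruleOf (S : State) : Rule :=
  if OverflowCond S then .overflow
  else if HaltCond S then .halt
  else if ZeroCond S then .zero
  else if S.headD 0 = -1 then .halve
  else .increment

/-- The transition function `P`.  (On a Halt state the process stops; we set `P S = S` there.)
Recall the list stores `a_0` first, so e.g. the Overflow rule
`(2a_ℓ+1, 2a_{ℓ-1}, …, 2a_0) ↦ (0, 2a_ℓ+2, 2a_{ℓ-1}, …, 2a_0)` appends a `0` at the end of
the list and adds `1` to the previously last element. -/
noncomputable def P (S : State) : State :=
  match ruleOf S with
  | .overflow => S.dropLast ++ [leftmost S + 1, 0]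
  | .halt => S
  | .zero => (S.set 0 (S.headD 0 - 1)).set (S.length - 1) (leftmost S + 1) ++ [0, 0]
  | .halve => S.tail
  | .increment =>
      let i := S.findIdx (fun x => x % 2 != 0)   -- index of the rightmost odd entry
      (S.set (i + 1) (S.getD (i + 1) 0 + 1)).set 0 (S.headD 0 - 1)

/-- `S ↦ T` : some iterate of `P` sends `S` to `T`. -/
def Reaches (S T : State) : Prop := ∃ m : ℕ, P^[m] S = T

/-- `σ(S) = +1` if the sum of the entries is odd, `-1` if it is even. -/
noncomputable def sigma (S : State) : ℤ := if Odd S.sum then 1 else -1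

/-- `n(S)`: the natural number whose Gray code digits (least significant first) are
`a_1 mod 2, a_2 mod 2, …, a_ℓ mod 2`.  Equivalently (standard Gray-code decoding),
bit `i` of `n(S)` is the parity of `a_{i+1} + ⋯ + a_ℓ`. -/
def nOf (S : State) : ℕ :=
  ∑ i ∈ Finset.range (ell S),
    2 ^ i * ((∑ j ∈ Finset.Icc (i + 1) (ell S), entry S j) % 2).toNat

/-- `⟨a / 2^j⟩` : the nearest integer to `a / 2^j`, rounding half-integers up. -/
def nearest (j a : ℕ) : ℕ := (2 * a + 2 ^ j) / 2 ^ (j + 1)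

/-- `d_j(a, b) = |⟨a/2^j⟩ - ⟨b/2^j⟩|`. -/
def dd (j a b : ℕ) : ℕ := Nat.dist (nearest j a) (nearest j b)

/-- `S_k = (0, 2, 2^2, …, 2^{2k}, 0)`. -/
def Sk (k : ℕ) : State :=
  0 :: (((List.range (2 * k)).map fun i => (2 : ℤ) ^ (2 * k - i)) ++ [0])

/-- An empty state: `n(E) = 0`, `σ(E) = -1`, and the next rule applied is not Halt. -/
def IsEmptyState (E : State) : Prop :=
  E ≠ [] ∧ nOf E = 0 ∧ sigma E = -1 ∧ ruleOf E ≠ Rule.halt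

/-- `m` is the first positive time at which the trajectory of `E` is at an empty state. -/
def NextEmptyAt (E : State) (m : ℕ) : Prop :=
  0 < m ∧ IsEmptyState (P^[m] E) ∧ ∀ t, 0 < t → t < m → ¬ IsEmptyState (P^[t] E)

/-- `N(E)` : the next empty state after `E` (junk value `[]` if it does not exist). -/
noncomputable def N (E : State) : State :=
  if h : ∃ m, NextEmptyAt E m then P^[h.choose] E else []

/-- The rule applied at time `j` belongs to `T_E`, the sequence of rules from `E` to the
next empty state after `E` (all rules after `E` when no next empty state exists). -/
def InTE (E : State) (j : ℕ) : Prop := ∀ t, 0 < t → t ≤ j → ¬ IsEmptyState (P^[t] E)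

/-- Weakly embanked: `T_E` consists of one Zero rule at the start and contains at least two
Halve rules, and all other rules before the second Halve rule are Increment rules. -/
def WeaklyEmbanked (E : State) : Prop :=
  IsEmptyState E ∧
  ∃ j₁ j₂, 0 < j₁ ∧ j₁ < j₂ ∧ InTE E j₂ ∧
    ruleOf (P^[j₁] E) = Rule.halve ∧ ruleOf (P^[j₂] E) = Rule.halve ∧
    ∀ t, 0 < t → t < j₂ → t ≠ j₁ → ruleOf (P^[t] E) = Rule.increment

/-- Embanked: the next empty state `N(E)` exists and the non-Increment rules of `T_E` consist
of exactly one Zero rule at the start and exactly two Halve rules elsewhere. -/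
def Embanked (E : State) : Prop :=
  IsEmptyState E ∧
  ∃ m j₁ j₂, NextEmptyAt E m ∧ 0 < j₁ ∧ j₁ < j₂ ∧ j₂ < m ∧
    ruleOf (P^[j₁] E) = Rule.halve ∧ ruleOf (P^[j₂] E) = Rule.halve ∧
    ∀ t, 0 < t → t < m → t ≠ j₁ → t ≠ j₂ → ruleOf (P^[t] E) = Rule.increment

/-- `h_i(E)` (`i ∈ {1,2}`): the value of `n` at the state immediately *after* the `i`-th
Halve rule applied after `E`. -/
noncomputable def hVal (E : State) (i : ℕ) : ℕ :=
  nOf (P^[Nat.nth (fun j => ruleOf (P^[j] E) = Rule.halve) (i - 1) + 1] E)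

/-- `s_i(E)` (`i ∈ {1,2}`): the value of `n` at the state immediately *before* the `i`-th
Halve rule applied after `E`. -/
noncomputable def sVal (E : State) (i : ℕ) : ℕ :=
  nOf (P^[Nat.nth (fun j => ruleOf (P^[j] E) = Rule.halve) (i - 1)] E)

/-- `E[i]` : the state `E` with the entry `a_i` replaced by `a_i + 2`. -/
def bump (E : State) (i : ℕ) : State := E.set i (E.getD i 0 + 2)

/-- `N'(E) = N^{⌈(i+1)/2⌉}(E)` for an embanked state `E` with `N(E) = E[i]`
(junk value `E` if no such `i` exists). -/
noncomputable def N' (E : State) : State :=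
  if h : ∃ i, i < E.length ∧ N E = bump E i then N^[(h.choose + 2) / 2] E else E

/-- A rooted embanked state: an embanked state obtained from `S_k` by applying `N'`
some number of times. -/
def RootedEmbanked (k : ℕ) (E : State) : Prop :=
  Embanked E ∧ ∃ e : ℕ, N'^[e] (Sk k) = E

/-- `κ_{E→E'}(j)` : the number of steps `S ↦ N(S)` with `N(S) = S[j]` along the chain
`E, N(E), N²(E), …, N^[t](E) = E'`. -/
noncomputable def kappa (E : State) (t j : ℕ) : ℕ :=
  ((Finset.range t).filter fun s => N (N^[s] E) = bump (N^[s] E) j).card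

/-! ### Counting integers by 2-adic valuation -/

/-- The number of `m ∈ [1, n]` whose 2-adic valuation is exactly `j`. -/
def r (j n : ℕ) : ℕ := (n + 2 ^ j) / 2 ^ (j + 1)

lemma r_zero (j : ℕ) : r j 0 = 0 := by
  unfold r
  apply Nat.div_eq_of_lt
  rw [pow_succ]; have := Nat.pos_of_ne_zero (pow_ne_zero j (two_ne_zero)); omega

lemma r_large {j n : ℕ} (h : n < 2 ^ j) : r j n = 0 := by
  unfold r
  apply Nat.div_eq_of_lt
  rw [pow_succ]; omega

lemma r_zero_left (n : ℕ) : r 0 n = (n + 1) / 2 := by simp [r]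

lemma r_double (j n : ℕ) : r (j + 1) (2 * n) = r j n := by
  unfold r
  rw [show 2 * n + 2 ^ (j + 1) = 2 * (n + 2 ^ j) by ring, pow_succ' 2 (j + 1),
    Nat.mul_div_mul_left _ _ two_pos]

lemma r_double_add (j n : ℕ) : r (j + 1) (2 * n + 1) = r j n := by
  unfold r
  rw [show 2 * n + 1 + 2 ^ (j + 1) = 2 * (n + 2 ^ j) + 1 by ring, pow_succ' 2 (j + 1),
    ← Nat.div_div_eq_div_mul]
  congr 1; omega

/-- The numerator of `r j` becomes divisible by `2 ^ (j + 1)` exactly when an integer of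
valuation `j` is passed; this is what makes the closed form of `r` a count. -/
lemma dvd_iff_val (j n : ℕ) : 2 ^ (j + 1) ∣ n + 1 + 2 ^ j ↔ j = padicValNat 2 (n + 1) := by
  obtain ⟨v, q, hq, h⟩ := Nat.exists_eq_two_pow_mul_odd (n := n + 1) (by omega)
  have hv : padicValNat 2 (n + 1) = v := by
    rw [h, padicValNat.mul (by positivity) (by rintro rfl; simp at hq), padicValNat.prime_pow,
      padicValNat.eq_zero_of_not_dvd (by rwa [← even_iff_two_dvd, Nat.not_even_iff_odd]),
      add_zero]
  rw [hv, h]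
  obtain ⟨p, rfl⟩ := hq
  constructor
  · intro hd
    rcases lt_trichotomy j v with hl | hl | hl
    · exfalso
      have h1 : 2 ^ (j + 1) ∣ 2 ^ v * (2 * p + 1) := (pow_dvd_pow 2 hl).mul_right _
      have h2 := (Nat.dvd_add_right h1).1 hd
      have := Nat.le_of_dvd (by positivity) h2
      rw [pow_succ] at this
      have : 0 < 2 ^ j := by positivity
      omega
    · exact hl
    · exfalso
      obtain ⟨d, rfl⟩ := Nat.exists_eq_add_of_lt hl
      rw [show 2 ^ v * (2 * p + 1) + 2 ^ (v + d + 1) = 2 ^ v * (2 * (p + 2 ^ d) + 1) by ring,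
        show 2 ^ (v + d + 1 + 1) = 2 ^ v * (2 * 2 ^ (d + 1)) by ring] at hd
      have := Nat.dvd_of_mul_dvd_mul_left (by positivity) hd
      have := (Dvd.intro _ rfl : 2 ∣ 2 * 2 ^ (d + 1)).trans this
      omega
  · rintro rfl
    exact ⟨p + 1, by ring⟩

lemma r_succ (j n : ℕ) :
    r j (n + 1) = r j n + if j = padicValNat 2 (n + 1) then 1 else 0 := by
  unfold r
  rw [show n + 1 + 2 ^ j = n + 2 ^ j + 1 by ring, Nat.succ_div]
  congr 1
  rw [show n + 2 ^ j + 1 = n + 1 + 2 ^ j by ring]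
  simp only [dvd_iff_val]

/-- The odd values `r j (n + 1)` with `j` below the valuation `v` of `n + 1` occur only at
`j = v - 1`. Hence the rightmost odd entry of a counting state locates the entry to be
changed next. -/
lemma r_parity {j n : ℕ} (h : j + 1 ≤ padicValNat 2 (n + 1)) :
    (j + 1 = padicValNat 2 (n + 1) → Odd (r j (n + 1))) ∧
    (j + 1 < padicValNat 2 (n + 1) → Even (r j (n + 1))) := by
  obtain ⟨v, q, hq, hn⟩ := Nat.exists_eq_two_pow_mul_odd (n := n + 1) (by omega)
  have hv : padicValNat 2 (n + 1) = v := by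
    rw [hn, padicValNat.mul (by positivity) (by rintro rfl; simp at hq), padicValNat.prime_pow,
      padicValNat.eq_zero_of_not_dvd (by rwa [← even_iff_two_dvd, Nat.not_even_iff_odd]),
      add_zero]
  rw [hv] at h ⊢
  obtain ⟨d, rfl⟩ := Nat.exists_eq_add_of_le h
  have : r j (n + 1) = 2 ^ d * q := by
    unfold r
    rw [hn, show 2 ^ (j + 1 + d) * q + 2 ^ j = 2 ^ j + 2 ^ (j + 1) * (2 ^ d * q) by ring,
      Nat.add_mul_div_left _ _ (by positivity), Nat.div_eq_of_lt, zero_add]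
    exact Nat.pow_lt_pow_right one_lt_two (by omega)
  rw [this]
  constructor
  · intro h; have : d = 0 := by omega
    simpa [this] using hq
  · intro h
    exact ((Nat.even_pow.2 ⟨even_two, by omega⟩ : Even (2 ^ d))).mul_right q

/-- Reflection `k ↦ 2 ^ m - k` preserves valuations, so the counts up to `x` and up to
`2 ^ m - 1 - x` add up to the count over all of `[1, 2 ^ m - 1]`. -/
lemma r_compl {J m x : ℕ} (hx : x < 2 ^ m) (hJ : J < m) :
    r J (2 ^ m - 1 - x) + r J x = 2 ^ (m - 1 - J) := by
  obtain ⟨d, rfl⟩ := Nat.exists_eq_add_of_lt hJ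
  have e1 : J + d + 1 - 1 - J = d := by omega
  rw [e1]
  unfold r
  have e2 : 2 ^ (J + d + 1) = 2 ^ (J + 1) * 2 ^ d := by ring
  set B := 2 ^ (J + 1) with hB
  have hBJ : B = 2 * 2 ^ J := by rw [hB]; ring
  have hB0 : 0 < B := by positivity
  have h1 := Nat.div_add_mod (x + 2 ^ J) B
  have h2 := Nat.mod_lt (x + 2 ^ J) hB0
  set k := (x + 2 ^ J) / B
  set t := (x + 2 ^ J) % B
  have hk : k ≤ 2 ^ d := by
    have : B * k < B * (2 ^ d + 1) := by rw [mul_add, ← e2]; omega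
    have := Nat.lt_of_mul_lt_mul_left this
    omega
  obtain ⟨e, he⟩ := Nat.exists_eq_add_of_le hk
  have : 2 ^ (J + d + 1) - 1 - x + 2 ^ J = (B - 1 - t) + B * e := by
    have : 2 ^ (J + d + 1) = B * k + B * e := by rw [e2, he, mul_add]
    omega
  rw [this, Nat.add_mul_div_left _ _ hB0, Nat.div_eq_of_lt (by omega)]
  omega

lemma r_full {J m : ℕ} (hJ : J < m) : r J (2 ^ m - 1) = 2 ^ (m - 1 - J) := by
  have := r_compl (x := 0) (by positivity) hJ
  simpa [r_zero] using this

/-! ### Single steps of the process -/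

/-- The state of length `l + 1` with `a_0 = a` and `a_{j+1} = f j` for `j < l`. -/
def st (l : ℕ) (a : ℤ) (f : ℕ → ℤ) : State := a :: (List.range l).map f

lemma st_congr {l : ℕ} {a a' : ℤ} {f g : ℕ → ℤ} (ha : a = a') (h : ∀ j < l, f j = g j) :
    st l a f = st l a' g := by
  subst ha
  unfold st
  congr 1
  apply List.map_congr_left
  intro j hj; exact h j (List.mem_range.1 hj)

lemma st_succ (l : ℕ) (a : ℤ) (f : ℕ → ℤ) :
    (st (l + 1) a f).tail = st l (f 0) (fun j => f (j + 1)) := by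
  simp [st, List.range_succ_eq_map, Function.comp_def]

lemma st_snoc (l : ℕ) (a : ℤ) (f : ℕ → ℤ) : st (l + 1) a f = st l a f ++ [f l] := by
  simp [st, List.range_succ]

lemma st_dropLast (l : ℕ) (a : ℤ) (f : ℕ → ℤ) : (st (l + 1) a f).dropLast = st l a f := by
  rw [st_snoc, List.dropLast_concat]

lemma mem_st {l : ℕ} {a : ℤ} {f : ℕ → ℤ} {x : ℤ} :
    x ∈ st l a f ↔ x = a ∨ ∃ j < l, f j = x := by
  simp [st]

lemma st_getLastD (l : ℕ) (a d : ℤ) (f : ℕ → ℤ) : (st (l + 1) a f).getLastD d = f l := by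
  rw [st_snoc]; simp

lemma rule_increment_of {l : ℕ} {a : ℤ} {f : ℕ → ℤ} (ha : a ≠ -1)
    (h : ∃ x ∈ st l a f, Odd x) : ruleOf (st (l + 1) a f) = Rule.increment := by
  obtain ⟨x, hx, ho⟩ := h
  have ho' := Int.not_even_iff_odd.2 ho
  have hx' : x ∈ st (l + 1) a f := by rw [st_snoc]; simp [hx]
  have h1 : ¬ OverflowCond (st (l + 1) a f) := by
    rintro ⟨-, h⟩; rw [st_dropLast] at h; exact ho' (h x hx)
  have h2 : ¬ HaltCond (st (l + 1) a f) := fun h => ho' (h.1 x hx')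
  have h3 : ¬ ZeroCond (st (l + 1) a f) := fun h => ho' (h.1 x hx')
  simp [ruleOf, h1, h2, h3]
  simpa [st] using ha

lemma P_halve {l : ℕ} {f : ℕ → ℤ} :
    P (st (l + 1) (-1) f) = st l (f 0) (fun j => f (j + 1)) := by
  have ho' : ¬ Even (-1 : ℤ) := by decide
  have h1 : ¬ OverflowCond (st (l + 1) (-1) f) := by
    rintro ⟨-, h⟩; rw [st_dropLast] at h; exact ho' (h _ (by simp [st]))
  have h2 : ¬ HaltCond (st (l + 1) (-1) f) := fun h => ho' (h.1 _ (by simp [st]))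
  have h3 : ¬ ZeroCond (st (l + 1) (-1) f) := fun h => ho' (h.1 _ (by simp [st]))
  have : ruleOf (st (l + 1) (-1) f) = Rule.halve := by
    simp [ruleOf, h1, h2, h3]; simp [st]
  rw [← st_succ (a := -1)]
  simp [P, this]

/-- The Increment rule, where the rightmost odd entry has index `v`. -/
lemma P_increment {l v : ℕ} {a : ℤ} {f : ℕ → ℤ} (ha : a ≠ -1) (hv : v < l)
    (h0 : v = 0 → Odd a)
    (h1 : v ≠ 0 → Even a ∧ Odd (f (v - 1)) ∧ ∀ j < v - 1, Even (f j)) :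
    P (st l a f) = st l (a - 1) (fun j => f j + if j = v then 1 else 0) := by
  obtain ⟨l, rfl⟩ : ∃ l', l = l' + 1 := ⟨l - 1, by omega⟩
  have hr : ruleOf (st (l + 1) a f) = Rule.increment := by
    apply rule_increment_of ha
    rcases Nat.eq_zero_or_pos v with h | h
    · exact ⟨a, by simp [st], h0 h⟩
    · exact ⟨f (v - 1), mem_st.2 (Or.inr ⟨v - 1, by omega, rfl⟩), (h1 (by omega)).2.1⟩
  have hb : ∀ x : ℤ, (x % 2 != 0) = true ↔ Odd x := by
    intro x; simp [Int.odd_iff]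
  have hi : (st (l + 1) a f).findIdx (fun x => x % 2 != 0) = v := by
    rw [List.findIdx_eq (by simp [st]; omega)]
    constructor
    · rw [hb]
      rcases v with _ | v
      · simpa [st] using h0 rfl
      · simpa [st] using (h1 (by omega)).2.1
    · intro j hj
      rw [← Bool.not_eq_true, hb, Int.not_odd_iff_even]
      have := h1 (by omega)
      rcases j with _ | j
      · simpa [st] using this.1
      · simpa [st] using this.2.2 j (by omega)
  simp only [P, hr, hi]
  apply List.ext_getElem
  · simp [st]
  · intro n hn hn'
    rcases n with _ | n
    · simp [st]
    · simp [st] at hn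
      have hn2 : n < l + 1 := by omega
      simp only [st, List.headD_cons, List.getElem_set]
      simp [hv]
      by_cases h : n = v
      · subst h; simp
      · rw [if_neg (by omega), if_neg h]; simp

/-- The Zero rule; `f` vanishes beyond the state so that the two new entries `0, 0` are
again values of `f`. -/
lemma P_zero {l : ℕ} {a : ℤ} {f : ℕ → ℤ} (ha : Even a) (hf : ∀ j < l + 2, Even (f j))
    (hn : ¬ HaltCond (st (l + 2) a f)) (h0 : ∀ j, l + 2 ≤ j → f j = 0) :
    P (st (l + 2) a f) = st (l + 4) (a - 1) (fun j => f j + if j = l + 1 then 1 else 0) := by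
  have hall : ∀ x ∈ st (l + 2) a f, Even x := by
    intro x hx
    rcases mem_st.1 hx with rfl | ⟨j, hj, rfl⟩
    · exact ha
    · exact hf j hj
  have h1 : ¬ OverflowCond (st (l + 2) a f) := by
    rintro ⟨h, -⟩
    rw [leftmost, st_getLastD] at h
    exact Int.not_even_iff_odd.2 h (hf _ (by omega))
  have hr : ruleOf (st (l + 2) a f) = Rule.zero := by
    have h3 : ZeroCond (st (l + 2) a f) := ⟨hall, hn⟩
    simp [ruleOf, h1, hn, h3]
  simp only [P, hr]
  rw [leftmost, st_getLastD, st_snoc (l + 3), st_snoc (l + 2)]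
  rw [List.append_assoc]
  congr 1
  · apply List.ext_getElem
    · simp [st]
    · intro n hn hn'
      rcases n with _ | n
      · simp [st]
      · simp [st, List.getElem_set]
        by_cases h : n = l + 1
        · subst h; simp
        · rw [if_neg (by omega), if_neg h]; simp
  · simp [h0 (l + 2) le_rfl, h0 (l + 3) (by omega)]

lemma P_overflow {l : ℕ} {a : ℤ} {f : ℕ → ℤ} (ha : Even a) (hf : ∀ j < l, Even (f j))
    (ho : Odd (f l)) :
    P (st (l + 1) a f) =
      st (l + 2) a (fun j => if j < l then f j else if j = l then f l + 1 else 0) := by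
  have h1 : OverflowCond (st (l + 1) a f) := by
    refine ⟨by rwa [leftmost, st_getLastD], ?_⟩
    rw [st_dropLast]
    intro x hx
    rcases mem_st.1 hx with rfl | ⟨j, hj, rfl⟩
    · exact ha
    · exact hf j hj
  have hr : ruleOf (st (l + 1) a f) = Rule.overflow := by
    simp [ruleOf, h1]
  simp only [P, hr]
  rw [leftmost, st_getLastD, st_dropLast, st_snoc (l + 1), st_snoc l, List.append_assoc]
  congr 1
  · exact st_congr rfl fun j hj => by simp [hj]
  · simp

lemma val_lt {n l : ℕ} (h : n + 1 < 2 ^ l) : padicValNat 2 (n + 1) < l := by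
  have h1 : 2 ^ padicValNat 2 (n + 1) ≤ n + 1 := Nat.le_of_dvd (by omega) pow_padicValNat_dvd
  exact (Nat.pow_lt_pow_iff_right one_lt_two).1 (h1.trans_lt h)

lemma val_eq_zero_iff (n : ℕ) : padicValNat 2 (n + 1) = 0 ↔ Even n := by
  rw [padicValNat.eq_zero_iff, ← even_iff_two_dvd]
  simp [Nat.even_add_one]

/-! ### Runs of Increment steps -/

/-- A state whose entries have been incremented by a counter that has run from `0` to `n`:
the step from `n` to `n + 1` adds one to the entry of index `v + 1`, with `v` the 2-adic
valuation of `n + 1`. The base values `c j` are even in all uses. -/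
def up (l : ℕ) (a : ℤ) (c : ℕ → ℤ) (n : ℕ) : State := st l a (fun j => c j + r j n)

/-- The counterpart of `up` for a counter running downwards: from here the counter has `n`
more values to pass, and the entries `c j` are reached when it gets to `0`. -/
def down (l : ℕ) (a : ℤ) (c : ℕ → ℤ) (n : ℕ) : State := st l a (fun j => c j - r j n)

lemma P_down {l n : ℕ} {a : ℤ} {c : ℕ → ℤ} (hc : ∀ j < l, Even (c j)) (hn : n + 1 < 2 ^ l)
    (ha : 0 ≤ a) (hp : Even (a + (n + 1 : ℕ))) :
    P (down l a c (n + 1)) = down l (a - 1) c n := by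
  have hv := val_lt hn
  unfold down
  rw [P_increment (v := padicValNat 2 (n + 1)) (by omega) hv]
  · apply st_congr rfl
    intro j _
    rw [r_succ]; push_cast; ring
  · rw [val_eq_zero_iff]
    intro h
    by_contra h2
    rw [Int.not_odd_iff_even] at h2
    obtain ⟨x, hx⟩ := h; obtain ⟨y, hy⟩ := h2; obtain ⟨z, hz⟩ := hp; push_cast at hz; omega
  · intro h0
    refine ⟨?_, ?_, ?_⟩
    · rw [Ne, val_eq_zero_iff, Nat.not_even_iff_odd] at h0
      by_contra h2
      rw [Int.not_even_iff_odd] at h2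
      obtain ⟨x, hx⟩ := h0; obtain ⟨y, hy⟩ := h2; obtain ⟨z, hz⟩ := hp; push_cast at hz; omega
    · have h := (r_parity (j := padicValNat 2 (n + 1) - 1) (n := n) (by omega)).1 (by omega)
      exact (hc _ (by omega)).sub_odd (by exact_mod_cast h)
    · intro j hj
      have h := (r_parity (j := j) (n := n) (by omega)).2 (by omega)
      exact (hc _ (by omega)).sub (by exact_mod_cast h)

lemma P_up {l n : ℕ} {a : ℤ} {c : ℕ → ℤ} (hc : ∀ j < l, Even (c j)) (hn : n + 1 < 2 ^ l)
    (ha : 0 ≤ a) (hp : Odd (a + n)) :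
    P (up l a c n) = up l (a - 1) c (n + 1) := by
  have hv := val_lt hn
  unfold up
  rw [P_increment (v := padicValNat 2 (n + 1)) (by omega) hv]
  · apply st_congr rfl
    intro j _
    rw [r_succ]; push_cast; ring
  · rw [val_eq_zero_iff]
    intro h
    by_contra h2
    rw [Int.not_odd_iff_even] at h2
    obtain ⟨x, hx⟩ := h; obtain ⟨y, hy⟩ := h2; obtain ⟨z, hz⟩ := hp; omega
  · intro h0
    refine ⟨?_, ?_, ?_⟩
    · rw [Ne, val_eq_zero_iff, Nat.not_even_iff_odd] at h0
      by_contra h2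
      rw [Int.not_even_iff_odd] at h2
      obtain ⟨x, hx⟩ := h0; obtain ⟨y, hy⟩ := h2; obtain ⟨z, hz⟩ := hp; omega
    · have h := (r_parity (j := padicValNat 2 (n + 1) - 1) (n := n) (by omega)).1 (by omega)
      rw [r_succ, if_neg (by omega), add_zero] at h
      exact (hc _ (by omega)).add_odd (by exact_mod_cast h)
    · intro j hj
      have h := (r_parity (j := j) (n := n) (by omega)).2 (by omega)
      rw [r_succ, if_neg (by omega), add_zero] at h
      exact (hc _ (by omega)).add (by exact_mod_cast h)

/-- A descending run of `t` Increment steps. -/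
lemma reach_down {l : ℕ} {c : ℕ → ℤ} (hc : ∀ j < l, Even (c j)) (t : ℕ) :
    ∀ {n : ℕ} {a : ℤ}, n + t < 2 ^ l → -1 ≤ a → Even (a + n) →
      Reaches (down l (a + t) c (n + t)) (down l a c n) := by
  induction t with
  | zero => intro n a _ _ _; exact ⟨0, by simp⟩
  | succ t ih =>
    intro n a hn ha hp
    obtain ⟨m, hm⟩ := ih (n := n) (a := a) (by omega) ha hp
    refine ⟨m + 1, ?_⟩
    rw [Function.iterate_succ_apply, ← add_assoc n t 1, P_down hc (by omega) (by push_cast; omega),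
      show a + ((t + 1 : ℕ) : ℤ) - 1 = a + t by push_cast; ring, hm]
    obtain ⟨x, hx⟩ := hp
    exact ⟨x + t + 1, by push_cast; linarith⟩

/-- An ascending run of `t` Increment steps. -/
lemma reach_up {l : ℕ} {c : ℕ → ℤ} (hc : ∀ j < l, Even (c j)) (t : ℕ) :
    ∀ {n : ℕ} {a : ℤ}, n + t < 2 ^ l → -1 ≤ a → Odd (a + t + n) →
      Reaches (up l (a + t) c n) (up l a c (n + t)) := by
  induction t with
  | zero => intro n a _ _ _; exact ⟨0, by simp⟩
  | succ t ih =>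
    intro n a hn ha hp
    obtain ⟨m, hm⟩ := ih (n := n + 1) (a := a) (by omega) ha (by
      obtain ⟨x, hx⟩ := hp; exact ⟨x, by push_cast at hx ⊢; linarith⟩)
    refine ⟨m + 1, ?_⟩
    rw [Function.iterate_succ_apply, P_up hc (by omega) (by push_cast; omega) hp,
      show a + ((t + 1 : ℕ) : ℤ) - 1 = a + t by push_cast; ring, hm]
    congr 1; omega

lemma Reaches.trans {S T U : State} (h : Reaches S T) (h' : Reaches T U) : Reaches S U := by
  obtain ⟨m, rfl⟩ := h; obtain ⟨k, rfl⟩ := h'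
  exact ⟨k + m, Function.iterate_add_apply _ _ _ _⟩

lemma reaches_step (S : State) : Reaches S (P S) := ⟨1, rfl⟩

/-! ### One round of the process -/

/-- `2 ^ (M - j)`, cut off to `0` for `j > M`. Half of the count `r j (2 ^ (M + 2) - 1)`,
up to the top term `j = M + 1`. -/
def cc (M j : ℕ) : ℕ := if j ≤ M then 2 ^ (M - j) else 0

/-- The shifted count `r (j - 1) w`, which is `0` at `j = 0`. -/
def rp (j w : ℕ) : ℕ := match j with
  | 0 => 0
  | j + 1 => r j w

/-- The state with entries `2 * b 0, …, 2 * b (M + 3)`. For `M` even these are the states at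
which a round of the process begins. -/
def emb (M : ℕ) (b : ℕ → ℕ) : State := st (M + 3) (2 * b 0) (fun j => 2 * b (j + 1))

lemma r_y {M j x : ℕ} (hx : x < 2 ^ (M + 2)) :
    (r j (2 ^ (M + 2) - 1 - x) : ℤ) = 2 * cc M j + (if j = M + 1 then 1 else 0) - r j x := by
  rcases Nat.lt_or_ge j (M + 2) with h | h
  · have := r_compl hx h
    rw [eq_sub_iff_add_eq]
    norm_cast
    rw [this, cc]
    rcases Nat.lt_or_ge M j with h' | h'
    · obtain rfl : j = M + 1 := by omega
      simp
    · rw [if_pos h', if_neg (by omega), ← pow_succ', add_zero]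
      congr 1; omega
  · have h2 : 2 ^ (M + 2) ≤ 2 ^ j := Nat.pow_le_pow_right two_pos h
    rw [r_large (by omega), r_large (by omega), cc, if_neg (by omega), if_neg (by omega)]
    simp

lemma r_full' (M j : ℕ) :
    (r j (2 ^ (M + 2) - 1) : ℤ) = 2 * cc M j + (if j = M + 1 then 1 else 0) := by
  have := r_y (M := M) (j := j) (x := 0) (by positivity)
  simpa [r_zero] using this

lemma emb_not_halt {M : ℕ} {b : ℕ → ℕ} (htop : 1 ≤ b (M + 2)) : ¬ HaltCond (emb M b) := by
  rintro ⟨-, -, h⟩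
  rw [emb, st_dropLast, st_getLastD] at h
  norm_cast at h
  rw [show M + 1 + 1 = M + 2 from rfl] at h
  omega

/-- The base values of the ascending run that follows the first Halve step. -/
def cU (M : ℕ) (b : ℕ → ℕ) (j : ℕ) : ℤ := 2 * ((b (j + 2) : ℤ) + r j (b 0) - cc M j)

lemma even_cU (M : ℕ) (b : ℕ → ℕ) (j : ℕ) : Even (cU M b j) := even_two_mul _

/-- From `emb M b`, one Zero step, a descending run of `2 * b 0` steps, and one Halve step lead
to the start of an ascending run with counter `2 ^ (M + 2) - 1 - b 0`. -/
lemma phase_one {M : ℕ} {b : ℕ → ℕ} (hz : ∀ j, M + 3 < j → b j = 0) (htop : 1 ≤ b (M + 2))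
    (hx : b 0 < 2 ^ (M + 2)) :
    Reaches (P (emb M b)) (up (M + 4) (2 * b 1 + b 0) (cU M b) (2 ^ (M + 2) - 1 - b 0)) := by
  set x := b 0 with hxd
  set y := 2 ^ (M + 2) - 1 - x with hy
  have hpow : 2 ^ (M + 3) = 2 * 2 ^ (M + 2) := by ring
  have hyx : y + x + 1 = 2 ^ (M + 2) := by omega
  have hpow5 : 2 ^ (M + 5) = 8 * 2 ^ (M + 2) := by ring
  have hpow2 : 2 ^ (M + 2) = 2 * 2 ^ (M + 1) := by ring
  -- the Zero step leaves a counter at `2 ^ (M + 3) - 1 = 2 * y + 1 + 2 * x`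
  let c : ℕ → ℤ := fun j => 2 * b (j + 1) + (if j = M + 2 then 1 else 0) + r j (2 ^ (M + 3) - 1)
  have hc1 : ∀ j, c (j + 1) = 2 * (b (j + 2) + (if j = M + 1 then 1 else 0) + cc M j) := by
    intro j
    simp only [c]
    rw [show 2 ^ (M + 3) - 1 = 2 * (2 ^ (M + 2) - 1) + 1 by omega, r_double_add, r_full']
    simp only [show j + 1 = M + 2 ↔ j = M + 1 by omega]
    ring
  have hc0 : c 0 = 2 * (b 1 + 2 ^ (M + 1) : ℤ) := by
    simp only [c]
    rw [r_full (by omega)]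
    simp
    ring
  have hce : ∀ j, Even (c j) := by
    intro j
    rcases j with _ | j
    · rw [hc0]; exact even_two_mul _
    · rw [hc1]; exact even_two_mul _
  have e1 : P (emb M b) = down (M + 5) (-1 + (2 * x : ℕ)) c (2 * y + 1 + 2 * x) := by
    unfold emb
    rw [P_zero (l := M + 1) (even_two_mul _) (fun j _ => even_two_mul _) (emb_not_halt htop)
      (fun j hj => by rw [hz _ (by omega)]; simp)]
    unfold down
    apply st_congr
    · push_cast; ring
    · intro j _
      rw [show 2 * y + 1 + 2 * x = 2 ^ (M + 3) - 1 by omega]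
      simp only [c]; ring
  rw [e1]
  refine (reach_down (fun j _ => hce j) (2 * x) (by omega) le_rfl ?_).trans ?_
  · exact ⟨y, by push_cast; ring⟩
  have e2 : P (down (M + 5) (-1) c (2 * y + 1)) = up (M + 4) (2 * b 1 + x) (cU M b) y := by
    unfold down
    rw [P_halve]
    unfold up
    apply st_congr
    · rw [hc0, r_zero_left, show (2 * y + 1 + 1) / 2 = y + 1 by omega]
      have : (y : ℤ) + 1 + x = 2 * 2 ^ (M + 1) := by
        have : y + 1 + x = 2 * 2 ^ (M + 1) := by omega
        exact_mod_cast this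
      push_cast; linarith
    · intro j _
      rw [hc1, r_double_add, hy, r_y hx, cU, ← hxd]
      ring
  rw [← e2]
  exact reaches_step _

/-- A full round without Overflow: after `phase_one` the ascending run ends at the even counter
value `2 * w`, where `w = 2 ^ (M + 1) + b 1`, a second Halve step follows, and a descending run
of `w` steps brings the counter back to `0`. The pulse equation `hp` says that the net effect
is to add `2` to the entry of index `i`. -/
lemma round_step {M i : ℕ} {b : ℕ → ℕ} (hz : ∀ j, M + 3 < j → b j = 0) (htop : 1 ≤ b (M + 2))
    (hx : b 0 < 2 ^ (M + 2)) (hw : 2 ^ (M + 1) + b 1 < 2 ^ (M + 3))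
    (hp : ∀ j, b j + (if j = i then 1 else 0) + cc M j =
      b (j + 2) + r j (b 0) + rp j (2 ^ (M + 1) + b 1)) :
    Reaches (P (emb M b)) (emb M fun j => b j + if j = i then 1 else 0) := by
  refine (phase_one hz htop hx).trans ?_
  set w := 2 ^ (M + 1) + b 1 with hwd
  set y := 2 ^ (M + 2) - 1 - b 0 with hy
  have hpow : 2 ^ (M + 4) = 2 * 2 ^ (M + 3) := by ring
  have hpow2 : 2 ^ (M + 2) = 2 * 2 ^ (M + 1) := by ring
  have hyw : y + (2 * b 1 + b 0 + 1) = 2 * w := by omega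
  -- `a` runs from `2 * b 1 + b 0` down to `-1`
  have e1 := reach_up (l := M + 4) (c := cU M b) (fun j _ => even_cU M b j) (2 * b 1 + b 0 + 1)
    (n := y) (a := -1) (by omega) le_rfl (by
      have : ((y + (2 * b 1 + b 0 + 1) : ℕ) : ℤ) = 2 * w := by exact_mod_cast hyw
      exact ⟨w - 1, by push_cast at this ⊢; linarith⟩)
  rw [hyw, show (-1 : ℤ) + ((2 * b 1 + b 0 + 1 : ℕ) : ℤ) = 2 * b 1 + b 0 by push_cast; ring] at e1
  refine e1.trans ((reaches_step _).trans ?_)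
  have e2 : P (up (M + 4) (-1) (cU M b) (2 * w)) =
      down (M + 3) (cU M b 0 + w) (fun j => cU M b (j + 1) + 2 * r j w) (0 + w) := by
    unfold up
    rw [P_halve]
    unfold down
    apply st_congr
    · rw [r_zero_left, show (2 * w + 1) / 2 = w by omega]
    · intro j _
      rw [r_double, zero_add]; ring
  rw [e2]
  have h0 : cU M b 0 = 2 * ((b 0 : ℤ) + if 0 = i then 1 else 0) := by
    have h := congrArg (Nat.cast : ℕ → ℤ) (hp 0)
    simp only [rp] at h
    push_cast at h
    simp only [cU]; linarith
  refine (reach_down (fun j _ => (even_cU M b _).add (even_two_mul _)) w (by omega) ?_ ?_).trans ?_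
  · rw [h0]; split_ifs <;> omega
  · simpa using even_cU M b 0
  · refine ⟨0, ?_⟩
    rw [Function.iterate_zero, id]
    unfold down emb
    apply st_congr
    · rw [h0]; push_cast; ring
    · intro j _
      have h := congrArg (Nat.cast : ℕ → ℤ) (hp (j + 1))
      simp only [rp] at h
      push_cast at h
      simp only [cU, r_zero]
      push_cast
      linarith

/-! ### Counting integers of odd valuation -/

lemma val_pow_mul (v p : ℕ) : padicValNat 2 (2 ^ v * (2 * p + 1)) = v := by
  rw [padicValNat.mul (by positivity) (by omega), padicValNat.prime_pow,
    padicValNat.eq_zero_of_not_dvd (by omega), add_zero]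

lemma val_pow_add {m t : ℕ} (h : t + 1 < 2 ^ m) :
    padicValNat 2 (2 ^ m + (t + 1)) = padicValNat 2 (t + 1) := by
  obtain ⟨v, q, ⟨p, rfl⟩, hn⟩ := Nat.exists_eq_two_pow_mul_odd (n := t + 1) (by omega)
  have hv : v < m := by
    refine (Nat.pow_lt_pow_iff_right one_lt_two).1 (lt_of_le_of_lt ?_ h)
    rw [hn]; exact Nat.le_mul_of_pos_right _ (by omega)
  obtain ⟨d, rfl⟩ := Nat.exists_eq_add_of_lt hv
  rw [hn, val_pow_mul,
    show 2 ^ (v + d + 1) + 2 ^ v * (2 * p + 1) = 2 ^ v * (2 * (2 ^ d + p) + 1) by ring,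
    val_pow_mul]

/-- The number of `m ∈ [1, n]` whose 2-adic valuation is odd. -/
noncomputable def q : ℕ → ℕ
  | 0 => 0
  | n + 1 => q n + if Odd (padicValNat 2 (n + 1)) then 1 else 0

lemma q_mono : Monotone q := monotone_nat_of_le_succ fun n => by simp [q]

lemma q_pow_add {m t : ℕ} (h : t < 2 ^ m) : q (2 ^ m + t) = q (2 ^ m) + q t := by
  induction t with
  | zero => simp [q]
  | succ t ih =>
    have h1 : q (2 ^ m + t + 1) = _ := rfl
    rw [← add_assoc, q, q, ih (by omega), add_assoc (2 ^ m), val_pow_add h, add_assoc]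

/-- With `Q = q (2 ^ (M + 2))` and `M` even, the last jump of `q` on `[1, 2 ^ (M + 2)]` is at
`2 ^ (M + 2) - 2`, of valuation `1`. -/
lemma q_top {M : ℕ} (hM : Even M) :
    q (2 ^ (M + 2) - 1) = q (2 ^ (M + 2)) ∧ q (2 ^ (M + 2) - 2) = q (2 ^ (M + 2)) ∧
      q (2 ^ (M + 2)) = q (2 ^ (M + 2) - 3) + 1 := by
  obtain ⟨k, hk⟩ : ∃ k, 2 ^ M = k + 1 := Nat.exists_eq_succ_of_ne_zero (by positivity)
  have h4 : 2 ^ (M + 2) = 4 * k + 1 + 1 + 1 + 1 := by rw [pow_add, hk]; ring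
  have v4 : ¬ Odd (padicValNat 2 (4 * k + 1 + 1 + 1 + 1)) := by
    rw [← h4, padicValNat.prime_pow, Nat.not_odd_iff_even]
    exact hM.add even_two
  have v3 : ¬ Odd (padicValNat 2 (4 * k + 1 + 1 + 1)) := by
    rw [show 4 * k + 1 + 1 + 1 = 2 ^ 0 * (2 * (2 * k + 1) + 1) by ring, val_pow_mul]
    simp
  have v2 : Odd (padicValNat 2 (4 * k + 1 + 1)) := by
    rw [show 4 * k + 1 + 1 = 2 ^ 1 * (2 * k + 1) by ring, val_pow_mul]
    simp
  have e4 : q (4 * k + 1 + 1 + 1 + 1) = q (4 * k + 1 + 1 + 1) := by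
    rw [q, if_neg v4, add_zero]
  have e3 : q (4 * k + 1 + 1 + 1) = q (4 * k + 1 + 1) := by
    rw [q, if_neg v3, add_zero]
  have e2 : q (4 * k + 1 + 1) = q (4 * k + 1) + 1 := by
    rw [q, if_pos v2]
  rw [h4]
  refine ⟨e4.symm, (e4.trans e3).symm, (e4.trans e3).trans e2⟩

lemma q_double {M : ℕ} (hM : Even M) :
    q (2 ^ (M + 3) - 1) = 2 * q (2 ^ (M + 2)) ∧ q (2 ^ (M + 3)) = 2 * q (2 ^ (M + 2)) + 1 := by
  have hpos : 0 < 2 ^ (M + 2) := by positivity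
  have h := q_pow_add (m := M + 2) (t := 2 ^ (M + 2) - 1) (by omega)
  rw [(q_top hM).1] at h
  have e : 2 ^ (M + 3) = 2 ^ (M + 2) + (2 ^ (M + 2) - 1) + 1 := by rw [pow_succ]; omega
  have v : Odd (padicValNat 2 (2 ^ (M + 2) + (2 ^ (M + 2) - 1) + 1)) := by
    rw [← e, padicValNat.prime_pow]; exact hM.add_odd (by decide)
  constructor
  · rw [e, Nat.add_sub_cancel, h, two_mul]
  · rw [e, q, if_pos v, h, two_mul]

/-- `x` is `0` or its valuation is odd, i.e. `x` is the point at which `q` attains the value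
`q x` for the first time. At `0` the disjunct is needed since `padicValNat 2 0 = 0`. -/
def Fresh (x : ℕ) : Prop := x = 0 ∨ Odd (padicValNat 2 x)

lemma eq_of_q_eq {M x : ℕ} (hM : Even M) (hx : x < 2 ^ (M + 2)) (hq : q x = q (2 ^ (M + 2)))
    (hf : Fresh x) : x = 2 ^ (M + 2) - 2 := by
  obtain ⟨h1, h2, h3⟩ := q_top hM
  have hlow : 2 ^ (M + 2) - 3 < x := by
    by_contra h
    have := q_mono (not_lt.1 h)
    omega
  have h4 : 2 ^ (M + 2) = 4 * 2 ^ M := by ring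
  have h5 : 0 < 2 ^ M := by positivity
  by_contra h
  have hx' : x = 2 ^ 0 * (2 * (2 * 2 ^ M - 1) + 1) := by omega
  rcases hf with hf | hf
  · omega
  · rw [hx', val_pow_mul] at hf
    simp at hf

/-! ### The invariant -/

/-- The invariant at the start of a round, for the state `emb M b` with pulse index `i`. Write
`x = b 0` and `w = 2 ^ (M + 1) + b 1`. The pulse equation says that the coming round adds `1` to
`b i`. The alternative in `range` separates the rounds without Overflow from the round, at
`w = 2 ^ (M + 3)`, in which Overflow happens. The last two fields tie the counters `w` and `x`
together: `q w - q (2 ^ (M + 2))` runs one ahead of `q x` while a pulse of even index is on its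
way to `x`, and agrees with it while a pulse of odd index is on its way to `w`. -/
structure Inv (M : ℕ) (b : ℕ → ℕ) (i : ℕ) : Prop where
  even : Even M
  zero : ∀ j, M + 3 < j → b j = 0
  top : 1 ≤ b (M + 2)
  pulse : ∀ j, b j + (if j = i then 1 else 0) + cc M j =
    b (j + 2) + r j (b 0) + rp j (2 ^ (M + 1) + b 1)
  lt : b 0 < 2 ^ (M + 2)
  range : (2 ^ (M + 1) + b 1 < 2 ^ (M + 3) ∧ i ≤ M + 3) ∨
    (2 ^ (M + 1) + b 1 = 2 ^ (M + 3) ∧ i = M + 4 ∧ Fresh (b 0))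
  odd_pulse : Odd i → q (2 ^ (M + 1) + b 1) = q (2 ^ (M + 2)) + q (b 0) ∧ Fresh (b 0)
  even_pulse : Even i → q (2 ^ (M + 1) + b 1) = q (2 ^ (M + 2)) + q (b 0) + 1

/-- After a round without Overflow the pulse moves from `i` to `i - 2`; a pulse arriving at `1` or
`0` increments `w` or `x`, and is sent out again at an index given by the valuation of the new
value. -/
lemma Inv.regular {M i : ℕ} {b : ℕ → ℕ} (h : Inv M b i) (hi : i ≤ M + 3)
    (hw : 2 ^ (M + 1) + b 1 < 2 ^ (M + 3)) :
    ∃ i', Inv M (fun j => b j + if j = i then 1 else 0) i' := by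
  have hzero : ∀ j, M + 3 < j → (b j + if j = i then 1 else 0) = 0 := by
    intro j hj
    rw [h.zero j hj, if_neg (by omega)]
  have htop : 1 ≤ b (M + 2) + if M + 2 = i then 1 else 0 := le_add_right h.top
  match i, h, hi, hzero, htop with
  | 0, h, hi, hzero, htop =>
    have hq := h.even_pulse Even.zero
    -- `q x + 1 = q w - Q ≤ Q`, so `x` has not reached the last jump of `q`
    have hx : b 0 + 1 < 2 ^ (M + 2) := by
      have h1 := q_mono (Nat.le_sub_one_of_lt hw)
      rw [(q_double h.even).1] at h1
      by_contra hc
      have h2 := q_mono (show 2 ^ (M + 2) - 2 ≤ b 0 by omega)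
      rw [(q_top h.even).2.1] at h2
      omega
    refine ⟨padicValNat 2 (b 0 + 1), h.even, hzero, htop, ?_, ?_, ?_, ?_, ?_⟩
    · intro j
      have := h.pulse j
      simp only [if_true, r_succ, one_ne_zero, if_false, add_zero,
        show j + 2 ≠ 0 by omega]
      omega
    · simpa using hx
    · left
      have := val_lt hx
      simp only [one_ne_zero, if_false, add_zero]
      exact ⟨hw, by omega⟩
    · intro ho
      simp only [if_true, one_ne_zero, if_false, add_zero]
      rw [q, if_pos ho]
      exact ⟨by omega, Or.inr ho⟩
    · intro he
      simp only [if_true, one_ne_zero, if_false, add_zero]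
      rw [q, if_neg (Nat.not_odd_iff_even.2 he)]
      omega
  | 1, h, hi, hzero, htop =>
    obtain ⟨hq, hf⟩ := h.odd_pulse odd_one
    refine ⟨padicValNat 2 (2 ^ (M + 1) + b 1 + 1) + 1, h.even, hzero, htop, ?_, ?_, ?_, ?_, ?_⟩
    · intro j
      have := h.pulse j
      rcases j with _ | j
      · simp only [rp, if_false, show (0 : ℕ) + 2 ≠ 1 by omega,
          (Nat.succ_ne_zero _).symm, add_zero] at this ⊢
        exact this
      · simp only [rp, zero_ne_one, if_false, if_true, add_left_inj, ← add_assoc, r_succ,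
          show j + 1 + 2 ≠ 1 by omega, add_zero] at this ⊢
        omega
    · simpa using h.lt
    · simp only [zero_ne_one, if_false, if_true, add_zero, ← add_assoc]
      rcases Nat.lt_or_ge (2 ^ (M + 1) + b 1 + 1) (2 ^ (M + 3)) with hlt | hge
      · left
        have := val_lt hlt
        exact ⟨hlt, by omega⟩
      · right
        have : 2 ^ (M + 1) + b 1 + 1 = 2 ^ (M + 3) := by omega
        refine ⟨this, ?_, hf⟩
        rw [this, padicValNat.prime_pow]
    · intro ho
      simp only [zero_ne_one, if_false, if_true, add_zero, ← add_assoc]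
      rw [q, if_neg (by rwa [Nat.odd_add_one] at ho)]
      exact ⟨by omega, hf⟩
    · intro he
      simp only [zero_ne_one, if_false, if_true, add_zero, ← add_assoc]
      rw [q, if_pos (by rwa [Nat.even_add_one, Nat.not_even_iff_odd] at he)]
      omega
  | i + 2, h, hi, hzero, htop =>
    have e0 : ((if 0 = i + 2 then 1 else 0) : ℕ) = 0 := if_neg (by omega)
    have e1 : ((if 1 = i + 2 then 1 else 0) : ℕ) = 0 := if_neg (by omega)
    refine ⟨i, h.even, hzero, htop, ?_, ?_, ?_, ?_, ?_⟩
    · intro j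
      have := h.pulse j
      simp only [e0, e1, add_zero, add_left_inj]
      omega
    · simpa only [e0, add_zero] using h.lt
    · simp only [e1, add_zero]
      exact Or.inl ⟨hw, by omega⟩
    · intro ho
      simp only [e0, e1, add_zero]
      exact h.odd_pulse (ho.add_even even_two)
    · intro he
      simp only [e0, e1, add_zero]
      exact h.even_pulse (he.add even_two)

/-! ### The round with an Overflow -/

lemma r_pow (j d : ℕ) : r j (2 ^ (j + 1 + d)) = 2 ^ d := by
  unfold r
  rw [show 2 ^ (j + 1 + d) + 2 ^ j = 2 ^ j + 2 ^ (j + 1) * 2 ^ d by ring,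
    Nat.add_mul_div_left _ _ (by positivity), Nat.div_eq_of_lt, zero_add]
  exact Nat.pow_lt_pow_right one_lt_two (by omega)

lemma r_pow_self (j : ℕ) : r j (2 ^ j) = 1 := by
  unfold r
  rw [← two_mul, ← pow_succ', Nat.div_self (by positivity)]

lemma r_pow_sub_two (j d : ℕ) :
    r j (2 ^ (j + 1 + d) - 2) + (if j = 0 then 1 else 0) = 2 ^ d := by
  rcases Nat.eq_zero_or_pos (j + d) with h | h
  · obtain ⟨rfl, rfl⟩ : j = 0 ∧ d = 0 := by omega
    simp [r_zero]
  · have h1 : 2 ^ 1 < 2 ^ (j + 1 + d) := Nat.pow_lt_pow_right one_lt_two (by omega)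
    have h2 := r_compl (J := j) (x := 1) (m := j + 1 + d) (by omega) (by omega)
    have h3 := r_succ j 0
    rw [r_zero, zero_add, zero_add] at h3
    rw [h3, show j + 1 + d - 1 - j = d by omega] at h2
    simpa [Nat.sub_sub] using h2

/-- Half the entries of the state after the Overflow step, with `N` the new value of `M`. -/
def newB (N : ℕ) : ℕ → ℕ
  | 0 => 0
  | 1 => 2 ^ (N + 1) - 2
  | j + 2 => if j ≤ N then 2 ^ (N - j) - j % 2 else 0

lemma newB_inv {N : ℕ} (hN : Even N) : Inv N (newB N) (N + 1) := by
  have h4 : 2 ^ (N + 1) = 2 * 2 ^ N := by ring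
  have h5 : 0 < 2 ^ N := by positivity
  have hw : 2 ^ (N + 1) + newB N 1 = 2 ^ (N + 2) - 2 := by
    simp only [newB]
    rw [pow_succ 2 (N + 1)]; omega
  refine ⟨hN, ?_, ?_, ?_, ?_, ?_, ?_, ?_⟩
  · intro j hj
    obtain ⟨j, rfl⟩ := Nat.exists_eq_add_of_lt hj
    rw [show N + 3 + j + 1 = (N + j + 2) + 2 by ring, newB, if_neg (by omega)]
  · simp [newB, Nat.even_iff.1 hN]
  · intro j
    rw [hw, show newB N 0 = 0 from rfl, r_zero, add_zero]
    rcases j with _ | _ | j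
    · simp [newB, rp, cc]
    · have h := r_pow_sub_two 0 (N + 1)
      rw [show 0 + 1 + (N + 1) = N + 2 by ring, if_pos rfl] at h
      simp only [rp, newB, cc]
      rcases Nat.eq_zero_or_pos N with rfl | hpos
      · simp at h ⊢; omega
      · have h6 : 2 ^ N = 2 * 2 ^ (N - 1) := by rw [← pow_succ']; congr 1; omega
        rw [if_neg (by omega), if_pos (by omega), if_pos (by omega)]
        norm_num at h ⊢
        omega
    · simp only [rp, newB, cc]
      rcases Nat.lt_or_ge N (j + 2) with hj | hj
      · rcases lt_trichotomy (j + 1) (N + 1) with h1 | h1 | h1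
        · obtain rfl : N = j + 1 := by omega
          have h := r_pow_sub_two (j + 1) 1
          rw [show j + 1 + 1 + 1 = j + 1 + 2 by ring] at h
          have := Nat.even_iff.1 hN
          simp at h ⊢
          omega
        · obtain rfl : j = N := by omega
          have h := r_pow_sub_two (j + 1) 0
          rw [show j + 1 + 1 + 0 = j + 2 by ring] at h
          have := Nat.even_iff.1 hN
          simp at h ⊢
          omega
        · rw [if_neg (by omega), if_neg (by omega), if_neg (by omega), if_neg (by omega), r_large]
          calc 2 ^ (N + 2) - 2 < 2 ^ (N + 2) := by omega
            _ ≤ 2 ^ (j + 1) := Nat.pow_le_pow_right two_pos (by omega)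
      · obtain ⟨d, rfl⟩ := Nat.exists_eq_add_of_le hj
        have h := r_pow_sub_two (j + 1) (d + 2)
        rw [show j + 1 + 1 + (d + 2) = j + 2 + d + 2 by ring, if_neg (by omega), add_zero] at h
        rw [h, if_pos (by omega), if_neg (by omega), if_pos (by omega), if_pos (by omega),
          show j + 2 + d - j = d + 2 by omega, show j + 2 + d - (j + 1 + 1) = d by omega]
        have h6 : 0 < 2 ^ d := by positivity
        have h7 : 2 ^ (d + 2) = 4 * 2 ^ d := by ring
        omega
  · simp [newB]
  · left
    rw [hw]
    refine ⟨?_, by omega⟩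
    have : 2 ^ (N + 3) = 2 * 2 ^ (N + 2) := by ring
    have : 0 < 2 ^ (N + 2) := by positivity
    omega
  · intro _
    rw [hw, (q_top hN).2.1]
    exact ⟨by simp [newB, q], Or.inl rfl⟩
  · intro h
    exact absurd h (by rw [Nat.not_even_iff_odd]; exact hN.add_one)

/-- When `w = 2 ^ (M + 3)` and `x = 2 ^ (M + 2) - 2`, the pulse equation determines `b` by
descending recursion, since `b` vanishes beyond `M + 3`. -/
lemma Inv.values {M : ℕ} {b : ℕ → ℕ} (h : Inv M b (M + 4))
    (hw : 2 ^ (M + 1) + b 1 = 2 ^ (M + 3)) (hx : b 0 = 2 ^ (M + 2) - 2) :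
    b (M + 3) = 1 ∧ ∀ d ≤ M + 1, b (M + 2 - d) + (if Even d then 1 else 0) = 3 * 2 ^ d := by
  have hp : ∀ j, b (j + 1) + (if j = M + 3 then 1 else 0) + cc M (j + 1) =
      b (j + 3) + r (j + 1) (2 ^ (M + 2) - 2) + r j (2 ^ (M + 3)) := by
    intro j
    have := h.pulse (j + 1)
    rw [hw, hx] at this
    simpa only [rp, add_left_inj, show j + 1 = M + 4 ↔ j = M + 3 by omega] using this
  have hlarge : ∀ j, M + 2 ≤ j → r j (2 ^ (M + 2) - 2) = 0 := by
    intro j hj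
    apply r_large
    have h1 : 0 < 2 ^ (M + 2) := by positivity
    have h2 : 2 ^ (M + 2) ≤ 2 ^ j := Nat.pow_le_pow_right two_pos hj
    omega
  have h3 : b (M + 3) = 1 := by
    have := hp (M + 2)
    rw [hlarge _ (by omega), h.zero (M + 2 + 3) (by omega),
      show M + 3 = M + 2 + 1 + 0 by ring, r_pow, cc] at this
    simpa using this
  refine ⟨h3, ?_⟩
  intro d
  induction d using Nat.strong_induction_on with
  | _ d ih =>
    intro hd
    match d, ih, hd with
    | 0, _, _ =>
      have := hp (M + 1)
      rw [hlarge _ (by omega), h.zero (M + 1 + 3) (by omega),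
        show M + 3 = M + 1 + 1 + 1 by ring, r_pow, cc] at this
      simp at this ⊢
      omega
    | 1, _, hd =>
      have := hp M
      have h1 := r_pow_sub_two (M + 1) 0
      rw [show M + 1 + 1 + 0 = M + 2 by ring] at h1
      rw [if_neg (by omega), h3, show M + 3 = M + 1 + 2 by ring, r_pow, cc] at this
      simp at this h1 ⊢
      omega
    | d + 2, ih, hd =>
      obtain ⟨k, rfl⟩ : ∃ k, M = d + 1 + k := ⟨M - (d + 1), by omega⟩
      have := hp k
      have h1 := r_pow_sub_two (k + 1) (d + 1)
      have h2 := ih d (by omega) (by omega)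
      rw [show k + 1 + 1 + (d + 1) = d + 1 + k + 2 by ring, if_neg (by omega)] at h1
      rw [show d + 1 + k + 2 - d = k + 3 by omega] at h2
      rw [if_neg (by omega), cc, if_pos (by omega), show d + 1 + k - (k + 1) = d by omega,
        show d + 1 + k + 3 = k + 1 + (d + 3) by ring, r_pow] at this
      rw [show d + 1 + k + 2 - (d + 2) = k + 1 by omega]
      have e : Even (d + 2) ↔ Even d := by simp [Nat.even_add]
      have h6 : 2 ^ (d + 2) = 4 * 2 ^ d := by ring
      have h7 : 2 ^ (d + 3) = 8 * 2 ^ d := by ring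
      have h8 : 2 ^ (d + 1) = 2 * 2 ^ d := by ring
      simp only [e]
      omega

/-- The invariant forces `x = 2 ^ (M + 2) - 2` when `w = 2 ^ (M + 3)`. The ascending run then
exhausts `a_0` at `0`, when the counter is `2 ^ (M + 4) - 1`, and only the leftmost
entry is odd, so the Overflow rule applies. -/
lemma Inv.overflow {M : ℕ} {b : ℕ → ℕ} (h : Inv M b (M + 4))
    (hw : 2 ^ (M + 1) + b 1 = 2 ^ (M + 3)) (hf : Fresh (b 0)) :
    Reaches (P (emb M b)) (emb (M + 2) (newB (M + 2))) := by
  have hx : b 0 = 2 ^ (M + 2) - 2 := by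
    have hq := h.even_pulse (h.even.add (by decide))
    rw [hw, (q_double h.even).2] at hq
    exact eq_of_q_eq h.even h.lt (by omega) hf
  obtain ⟨h3, hv⟩ := h.values hw hx
  have hpos : 0 < 2 ^ M := by positivity
  have p1 : 2 ^ (M + 1) = 2 * 2 ^ M := by ring
  have p2 : 2 ^ (M + 2) = 4 * 2 ^ M := by ring
  have p3 : 2 ^ (M + 3) = 8 * 2 ^ M := by ring
  have p4 : 2 ^ (M + 4) = 16 * 2 ^ M := by ring
  refine (phase_one h.zero h.top h.lt).trans ?_
  have hn : 2 ^ (M + 2) - 1 - b 0 + (2 * b 1 + b 0) = 2 ^ (M + 4) - 1 := by omega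
  have e1 := reach_up (l := M + 4) (c := cU M b) (fun j _ => even_cU M b j) (2 * b 1 + b 0)
    (n := 2 ^ (M + 2) - 1 - b 0) (a := 0) (by omega) (by norm_num) (by
      rw [zero_add, ← Nat.cast_add, add_comm (2 * b 1 + b 0), hn]
      exact_mod_cast Nat.Even.sub_odd (by omega) ⟨8 * 2 ^ M, by omega⟩ odd_one)
  rw [hn, show (0 : ℤ) + ((2 * b 1 + b 0 : ℕ) : ℤ) = 2 * b 1 + b 0 by push_cast; ring] at e1
  refine e1.trans ?_
  have hr : ∀ d ≤ M + 3, r (M + 3 - d) (2 ^ (M + 4) - 1) = 2 ^ d := by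
    intro d hd
    rw [r_full (by omega)]
    congr 1; omega
  -- the low entries of the state just before the overflow
  have hlow : ∀ j < M + 3, cU M b j + r j (2 ^ (M + 4) - 1) = 2 * newB (M + 2) (j + 1) := by
    intro j hj
    have hp := congrArg (Nat.cast : ℕ → ℤ) (h.pulse j)
    obtain ⟨d, hd⟩ := Nat.exists_eq_add_of_le (show j ≤ M + 2 by omega)
    have hr' : r j (2 ^ (M + 4) - 1) = 2 * 2 ^ d := by
      rw [r_full (by omega), ← pow_succ']; congr 1; omega
    rw [hw, if_neg (by omega)] at hp
    push_cast at hp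
    rw [hr', cU, show ((b (j + 2) : ℤ) + r j (b 0) - cc M j) =
      b j - rp j (2 ^ (M + 3)) by linarith]
    -- the pulse equation removes `b (j + 2)` and the count up to `x`
    suffices hs : b j + 2 ^ d = newB (M + 2) (j + 1) + rp j (2 ^ (M + 3)) by
      zify at hs; push_cast; linarith
    rcases j with _ | _ | j
    · obtain rfl : d = M + 2 := by omega
      simp only [newB, rp, hx, p2, show M + 2 + 1 = M + 3 from rfl, p3]
      omega
    · obtain rfl : d = M + 1 := by omega
      simp only [newB, rp, r_zero_left, p1, p3]
      simp
      omega
    · have h1 := hv d (by omega)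
      rw [show M + 2 - d = j + 1 + 1 by omega] at h1
      have hr2 : r (j + 1) (2 ^ (M + 3)) = 2 * 2 ^ d := by
        rw [show M + 3 = j + 1 + 1 + (d + 1) by omega, r_pow, pow_succ']
      have hE : Even d ↔ j % 2 = 0 := by
        have := Nat.even_iff.1 h.even
        rw [Nat.even_iff]; omega
      have hd0 : 0 < 2 ^ d := by positivity
      simp only [newB, rp]
      rw [hr2, if_pos (by omega), show M + 2 - (j + 1) = d + 1 by omega, pow_succ']
      simp only [hE] at h1
      split_ifs at h1 <;> omega
  have htop : cU M b (M + 3) + r (M + 3) (2 ^ (M + 4) - 1) = 1 := by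
    have := hr 0 (by omega)
    rw [Nat.sub_zero, pow_zero] at this
    rw [this, cU, h.zero _ (by omega), r_large (by omega), cc, if_neg (by omega)]
    simp
  have e2 : P (up (M + 4) 0 (cU M b) (2 ^ (M + 4) - 1)) = emb (M + 2) (newB (M + 2)) := by
    unfold up
    rw [P_overflow (l := M + 3) Even.zero]
    · unfold emb
      apply st_congr
      · simp [newB]
      · intro j hj
        rcases lt_trichotomy j (M + 3) with h1 | h1 | h1
        · rw [if_pos h1, hlow j h1]
        · subst h1
          simp [htop, newB]
          have := Nat.even_iff.1 h.even
          norm_num [show (M + 2) % 2 = 0 by omega, Nat.add_mod, this]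
        · rw [if_neg (by omega), if_neg (by omega)]
          obtain rfl : j = M + 4 := by omega
          simp [newB]
    · intro j hj
      rw [hlow j hj]
      exact even_two_mul _
    · rw [htop]; exact odd_one
  rw [← e2]
  exact reaches_step _

/-! ### Conclusion -/

/-- States at the start of a round that satisfy the invariant. -/
def Good (S : State) : Prop := ∃ M b i, S = emb M b ∧ Inv M b i

lemma Good.next {S : State} (h : Good S) : ∃ T, Reaches (P S) T ∧ Good T := by
  obtain ⟨M, b, i, rfl, h⟩ := h
  rcases h.range with ⟨hw, hi⟩ | ⟨hw, rfl, hf⟩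
  · obtain ⟨i', h'⟩ := h.regular hi hw
    exact ⟨_, round_step h.zero h.top h.lt hw h.pulse, M, _, i', rfl, h'⟩
  · exact ⟨_, h.overflow hw hf, M + 2, _, _, rfl, newB_inv (h.even.add even_two)⟩

lemma Good.not_halt {S : State} (h : Good S) : ¬ HaltCond S := by
  obtain ⟨M, b, i, rfl, h⟩ := h
  exact emb_not_halt h.top

lemma good_initial : Good ([0, 4, 2, 0] : State) := by
  let b : ℕ → ℕ := fun j => if j = 1 then 2 else if j = 2 then 1 else 0
  have v1 : padicValNat 2 1 = 0 := by simp
  have v2 : padicValNat 2 2 = 1 := by simp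
  have v3 : padicValNat 2 3 = 0 := by simp
  have v4 : padicValNat 2 4 = 2 := by simpa using val_pow_mul 2 0
  refine ⟨0, b, 3, by simp [emb, st, b, List.range_succ], Even.zero, ?_, ?_, ?_, ?_, ?_, ?_, ?_⟩
  · intro j hj
    simp only [b]
    rw [if_neg (by omega), if_neg (by omega)]
  · simp [b]
  · intro j
    rcases j with _ | _ | _ | _ | j
    · simp [b, rp, cc, r]
    · simp [b, rp, cc, r]
    · simp [b, rp, cc, r]
    · simp [b, rp, cc, r]
    · have h1 : 2 ^ (j + 3) = 8 * 2 ^ j := by ring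
      have h2 : 0 < 2 ^ j := by positivity
      simp [b, rp, cc, r_zero]
      rw [r_large (by omega)]
  · simp [b]
  · left; simp [b]
  · intro _
    simp [b, q, Fresh]
  · intro h
    exact absurd h (by decide)

/-- `P` is the identity on Halt states. -/
lemma P_halt {S : State} (h : HaltCond S) : P S = S := by
  have h1 : ¬ OverflowCond S := by
    rintro ⟨ho, -⟩
    obtain ⟨he, hl, -⟩ := h
    rcases S.eq_nil_or_concat with rfl | ⟨L, a, rfl⟩
    · simp [leftmost] at ho
    · simp only [leftmost, List.concat_eq_append, List.getLastD_concat] at ho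
      exact Int.not_even_iff_odd.2 ho (he a (by simp))
  have hr : ruleOf S = Rule.halt := by
    simp [ruleOf, h1, h]
  simp only [P, hr]

/-- Starting from the state `(0, 2, 4, 0)` (stored rightmost-first as
`[0, 4, 2, 0]`), the process never halts: no iterate under `P` is a state all of whose
entries are even and whose two leftmost entries are both `0`. -/
theorem statement_1 : ∀ m : ℕ, ¬ HaltCond (P^[m] ([0, 4, 2, 0] : State)) := by
  intro m hm
  have hlate : ∀ k, ∃ t, k ≤ t ∧ Good (P^[t] ([0, 4, 2, 0] : State)) := by
    intro k
    induction k with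
    | zero => exact ⟨0, le_rfl, good_initial⟩
    | succ k ih =>
      obtain ⟨t, ht, hg⟩ := ih
      obtain ⟨T, ⟨s, rfl⟩, hT⟩ := hg.next
      refine ⟨s + (t + 1), by omega, ?_⟩
      rwa [Function.iterate_add_apply, Function.iterate_succ_apply']
  obtain ⟨t, ht, hg⟩ := hlate m
  obtain ⟨d, rfl⟩ := Nat.exists_eq_add_of_le' ht
  rw [Function.iterate_add_apply, Function.iterate_fixed (P_halt hm)] at hg
  exact hg.not_halt hm

end Skelet17
end

section
/- Let E = (a_ℓ, …, a_1, a_0) be an embanked state with h(E) = (h_1, h_2) and s(E) = (s_1, s_2), and let i ∈ [0, ℓ] be such that E[i] is weakly embanked. Then h(E[i]) = (h_1 − 1, h_2) if i = 0, h(E[i]) = (h_1, h_2 + 1) if i = 1, and h(E[i]) = (h_1, h_2) if i ≥ 2; likewise s(E[i]) = (s_1 − 2, s_2) if i = 0, s(E[i]) = (s_1, s_2 + 2) if i = 1, and s(E[i]) = (s_1, s_2) if i ≥ 2. -/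
/-!
The orbit of a weakly embanked state `E = (a_ℓ, …, a_0)` can be followed explicitly up to its second
Halve rule, which yields closed forms for `s` and `h` in terms of `ℓ`, `a_0` and `a_1`.

The basic fact (`increment_step`) is that an Increment rule lowers `a_0` by one, keeps the sum of the
entries, and moves `n` by `σ`: it is the successor or predecessor step of the Gray code. It raises
`a_1` exactly when `a_0` is odd. A Halve rule replaces `n` by `⌊n/2⌋` and flips `σ`.

All entries of `E` are even, so the Zero rule leads to a state with `σ = -1` and `n = 2^ℓ - 1`
(for `ℓ ≥ 1`; the case `ℓ = 0` is excluded by running the process). Then `n` decreases by one for each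
unit of `a_0`, so that `s₁ = 2^ℓ - 1 - a_0` and `h₁ = ⌊s₁/2⌋`, while `a_1` has been raised `a_0/2` times.
After the first Halve rule `σ = +1` and `n` increases until the new rightmost entry reaches `-1`, so that
`s₂ = h₁ + (b + a_0/2 + 1) = 2^(ℓ-1) + b` and `h₂ = ⌊s₂/2⌋`, where `b` is `a_1`, plus one if `ℓ = 1`
because the Zero rule then also raises `a_1`. An embanked state is weakly embanked, so these formulas
(`weaklyEmbanked_values`) apply to both `E` and `E[i]`, and comparing them proves the claim.
-/


open scoped Classical

namespace Skelet17

/-! ### Gray codes of lists -/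

/-- The number whose Gray code digits, least significant first, are the parities of the entries of
the list. Thus `n(S)` is `gray` of the list without its first entry. -/
def gray : List ℤ → ℕ
  | [] => 0
  | x :: L => ((x :: L).sum % 2).toNat + 2 * gray L

lemma sum_entry_succ (a : ℤ) (L : List ℤ) (i m : ℕ) :
    ∑ j ∈ Finset.Icc (i + 1) (m + 1), entry (a :: L) j = ∑ j ∈ Finset.Icc i m, entry L j := by
  rw [← Finset.image_add_right_Icc, Finset.sum_image (by intro x _ y _ h; simpa using h)]
  exact Finset.sum_congr rfl fun j _ => by simp [entry]

lemma sum_entry_all (a : ℤ) (L : List ℤ) :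
    ∑ j ∈ Finset.Icc 1 L.length, entry (a :: L) j = L.sum := by
  induction L generalizing a with
  | nil => simp
  | cons b L ih =>
    rw [List.length_cons, ← Finset.add_sum_Ioc_eq_sum_Icc (by omega)]
    rw [← Finset.Icc_add_one_left_eq_Ioc, sum_entry_succ, ih]
    simp [entry]

lemma nOf_cons (a : ℤ) (L : List ℤ) : nOf (a :: L) = gray L := by
  induction L generalizing a with
  | nil => simp [nOf, ell, gray]
  | cons b L ih =>
    rw [gray, ← ih b, nOf]
    have e : ell (a :: b :: L) = L.length + 1 := by simp [ell]
    have e' : ell (b :: L) = L.length := by simp [ell]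
    rw [e, Finset.sum_range_succ', nOf, e', Finset.mul_sum, add_comm]
    congr 1
    · have := sum_entry_all a (b :: L)
      simp only [List.length_cons] at this
      simp [this]
    · refine Finset.sum_congr rfl fun i _ => ?_
      rw [sum_entry_succ]; ring

lemma sum_even (L : List ℤ) (hL : ∀ x ∈ L, Even x) : Even L.sum := by
  induction L with
  | nil => simp
  | cons y L ih =>
    simp only [List.mem_cons, forall_eq_or_imp] at hL
    rw [List.sum_cons]
    exact hL.1.add (ih hL.2)

lemma even_of_gray_eq_zero (L : List ℤ) (h : gray L = 0) : ∀ x ∈ L, Even x := by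
  induction L with
  | nil => simp
  | cons x L ih =>
    rw [gray] at h
    have hL := ih (by omega)
    have hs := sum_even L hL
    have : (x :: L).sum % 2 = 0 := by omega
    rw [List.sum_cons] at this
    intro y hy
    rcases List.mem_cons.1 hy with rfl | hy
    · grind
    · exact hL y hy

/-- The Gray code `0 0 1 0 ⋯ 0` whose `1` has `m` zeros to its right represents `2^(m+1) - 1`. -/
lemma gray_append (T : List ℤ) (z : ℤ) (hz : Even z) (hT : ∀ x ∈ T, Even x) :
    gray (T ++ [z + 1, 0, 0]) + 1 = 2 ^ (T.length + 1) := by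
  induction T with
  | nil =>
    have : (z + 1) % 2 = 1 := by grind
    simp [gray, this]
  | cons x T ih =>
    have hs := sum_even _ hT
    simp only [List.mem_cons, forall_eq_or_imp] at hT
    have ih := ih hT.2
    rw [List.cons_append, gray, List.length_cons, pow_succ, ← ih]
    have : (x :: (T ++ [z + 1, 0, 0])).sum % 2 = 1 := by
      simp at hs ⊢; grind
    rw [this]
    simp; ring

/-! ### The individual rules -/

/-- Raise by one the entry following the first odd one (if there is such an entry). -/
def bumpAfterOdd : List ℤ → List ℤ
  | [] => []
  | [x] => [x]
  | x :: y :: L => if x % 2 = 1 then x :: (y + 1) :: L else x :: bumpAfterOdd (y :: L)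

lemma set_findIdx_eq (S : List ℤ) :
    S.set (S.findIdx (fun x => x % 2 != 0) + 1) (S.getD (S.findIdx (fun x => x % 2 != 0) + 1) 0 + 1)
      = bumpAfterOdd S := by
  induction S with
  | nil => rfl
  | cons x S ih =>
    rw [List.findIdx_cons]
    rcases Int.emod_two_eq_zero_or_one x with h | h
    · cases S with
      | nil => simp [h, bumpAfterOdd]
      | cons y L => simpa [h, bumpAfterOdd] using ih
    · cases S with
      | nil => simp [h, bumpAfterOdd]
      | cons y L => simp [h, bumpAfterOdd]

lemma bumpAfterOdd_sum (S : List ℤ) (h : ∃ x ∈ S.dropLast, Odd x) :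
    (bumpAfterOdd S).sum = S.sum + 1 := by
  fun_induction bumpAfterOdd S with
  | case1 => simp at h
  | case2 => simp at h
  | case3 x y L hx => simp; ring
  | case4 x y L hx ih =>
    have := ih (by
      obtain ⟨z, hz, hz'⟩ := h
      simp only [List.dropLast_cons_cons, List.mem_cons] at hz
      rcases hz with rfl | hz
      · grind
      · exact ⟨z, hz, hz'⟩)
    rw [List.sum_cons, this, List.sum_cons (a := x)]; ring

lemma bumpAfterOdd_cons (y : ℤ) (L : List ℤ) :
    bumpAfterOdd (y :: L) = y :: (bumpAfterOdd (y :: L)).tail := by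
  cases L with
  | nil => rfl
  | cons z L => rw [bumpAfterOdd]; split <;> rfl

/-- The Gray code step: raising the entry after the first odd one increases `n(S)` by one if the sum
of the entries is odd (`σ = +1`), and decreases it by one if the sum is even (`σ = -1`). -/
lemma gray_tail_bumpAfterOdd (S : List ℤ) (h : ∃ x ∈ S.dropLast, Odd x) :
    (gray (bumpAfterOdd S).tail : ℤ) = gray S.tail + (2 * (S.sum % 2) - 1) := by
  fun_induction bumpAfterOdd S with
  | case1 => simp at h
  | case2 => simp at h
  | case3 x y L hx =>
    simp only [List.tail_cons, gray, List.sum_cons]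
    omega
  | case4 x y L hx ih =>
    have hS : ∃ x ∈ (y :: L).dropLast, Odd x := by
      obtain ⟨z, hz, hz'⟩ := h
      simp only [List.dropLast_cons_cons, List.mem_cons] at hz
      rcases hz with rfl | hz
      · grind
      · exact ⟨z, hz, hz'⟩
    have h1 := ih hS
    have h2 := bumpAfterOdd_sum _ hS
    rw [List.tail_cons, List.tail_cons]
    rw [bumpAfterOdd_cons] at h2 ⊢
    simp only [List.tail_cons] at h1
    rw [gray, h2, gray]
    simp only [List.sum_cons] at *
    push_cast
    omega

/-- If the Increment rule applies, some entry other than the leftmost one is odd. -/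
lemma exists_odd_of_increment (S : State) (h : ruleOf S = .increment) :
    ∃ x ∈ S.dropLast, Odd x := by
  by_contra! hc
  simp only [Int.not_odd_iff_even] at hc
  have hS : ¬ OverflowCond S ∧ ¬ HaltCond S ∧ ¬ ZeroCond S := by
    unfold ruleOf at h
    split_ifs at h <;> simp_all
  have hl : Even (leftmost S) := by
    by_contra hl
    exact hS.1 ⟨Int.not_even_iff_odd.1 hl, hc⟩
  refine hS.2.2 ⟨?_, hS.2.1⟩
  intro x hx
  rcases List.eq_nil_or_concat S with rfl | ⟨L, b, rfl⟩
  · simp at hx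
  · simp [leftmost] at hl hc hx
    rcases hx with hx | rfl
    · exact hc x hx
    · exact hl

/-- The effect of an Increment rule on `a_0`, the sum, `n` and `a_1`. -/
lemma increment_step (S : State) (h : ruleOf S = .increment) :
    entry (P S) 0 = entry S 0 - 1 ∧ (P S).sum = S.sum ∧
    (nOf (P S) : ℤ) = nOf S + (2 * (S.sum % 2) - 1) ∧
    entry (P S) 1 = entry S 1 + entry S 0 % 2 := by
  have ho := exists_odd_of_increment S h
  have hP : P S = (bumpAfterOdd S).set 0 (S.headD 0 - 1) := by
    rw [← set_findIdx_eq]; unfold P; rw [h]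
  rw [hP]
  have hsum := bumpAfterOdd_sum S ho
  have hg := gray_tail_bumpAfterOdd S ho
  match S, ho with
  | [], ho => simp at ho
  | [x], ho => simp at ho
  | x :: y :: L, _ =>
    have e1 : entry (bumpAfterOdd (x :: y :: L)) 1 = y + x % 2 := by
      simp only [bumpAfterOdd]
      split
      · next hx => simp [entry, hx]
      · next hx =>
        have : x % 2 = 0 := by omega
        rw [bumpAfterOdd_cons]; simp [entry, this]
    rw [bumpAfterOdd_cons] at hsum e1 ⊢
    simp only [List.tail_cons] at hg
    simp only [List.set_cons_zero, nOf_cons]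
    refine ⟨by simp [entry], ?_, hg, by simpa [entry] using e1⟩
    simp at hsum ⊢
    omega

/-- The effect of a Halve rule. -/
lemma halve_step (S : State) (h : ruleOf S = .halve) :
    entry S 0 = -1 ∧ entry (P S) 0 = entry S 1 ∧ (P S).sum = S.sum + 1 ∧
    nOf (P S) = nOf S / 2 := by
  have hh : S.headD 0 = -1 := by
    unfold ruleOf at h
    split_ifs at h; assumption
  have hP : P S = S.tail := by unfold P; rw [h]
  rw [hP]
  match S with
  | [] => simp at hh
  | [x] =>
    simp at hh
    simp [entry, hh, nOf, ell]
  | x :: y :: L =>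
    simp at hh
    refine ⟨by simp [entry, hh], by simp [entry], by simp [hh], ?_⟩
    rw [List.tail_cons, nOf_cons, nOf_cons, gray]
    omega

lemma empty_even (E : State) (h : IsEmptyState E) : ∀ x ∈ E, Even x := by
  obtain ⟨h0, hn, hs, -⟩ := h
  match E with
  | [] => simp at h0
  | x :: L =>
    rw [nOf_cons] at hn
    have hL := even_of_gray_eq_zero L hn
    have := sum_even L hL
    have hx : ¬ Odd (x :: L).sum := by
      intro ho
      rw [sigma, if_pos ho] at hs
      norm_num at hs
    rw [List.sum_cons, Int.not_odd_iff_even, Int.even_add] at hx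
    intro y hy
    rcases List.mem_cons.1 hy with rfl | hy
    · exact hx.2 this
    · exact hL y hy

lemma empty_rule (E : State) (h : IsEmptyState E) : ruleOf E = .zero := by
  have he := empty_even E h
  have hnh := h.2.2.2
  have hno : ¬ OverflowCond E := by
    rintro ⟨ho, -⟩
    rcases List.eq_nil_or_concat E with rfl | ⟨L, b, rfl⟩
    · simp [leftmost] at ho
    · simp [leftmost] at ho
      exact Int.not_even_iff_odd.2 ho (he b (by simp))
  have hh : ¬ HaltCond E := by
    intro hh; apply hnh; simp [ruleOf, hno, hh]
  have hz : ZeroCond E := ⟨he, hh⟩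
  simp [ruleOf, hno, hh, hz]

/-- The effect of the Zero rule applied to an empty state with at least two entries. -/
lemma zero_step (E : State) (h : IsEmptyState E) (hl : 1 ≤ ell E) :
    entry (P E) 0 = entry E 0 - 1 ∧ Even (P E).sum ∧ (nOf (P E) : ℤ) = 2 ^ ell E - 1 ∧
    entry (P E) 1 = entry E 1 + if ell E = 1 then 1 else 0 := by
  have he := empty_even E h
  have hr := empty_rule E h
  match E with
  | [] => simp [ell] at hl
  | a :: L =>
    rcases List.eq_nil_or_concat L with rfl | ⟨T, z, rfl⟩
    · simp [ell] at hl
    · rw [List.concat_eq_append] at *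
      have hP : P (a :: (T ++ [z])) = (a - 1) :: (T ++ [z + 1, 0, 0]) := by
        unfold P; rw [hr]; simp [leftmost, List.getLast?_cons]
      rw [hP, nOf_cons]
      have hT : ∀ x ∈ T, Even x := fun x hx => he x (by simp [hx])
      have hz : Even z := he z (by simp)
      have ha : Even a := he a (by simp)
      have hg := gray_append T z hz hT
      have hs := sum_even T hT
      have hlen : ell (a :: (T ++ [z])) = T.length + 1 := by simp [ell]
      refine ⟨by simp [entry], ?_, ?_, ?_⟩
      · simp; grind
      · rw [hlen]; zify at hg; linarith
      · rw [hlen]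
        cases T <;> simp [entry]

/-! ### Weakly embanked states -/

/-- A one-entry state is not weakly embanked: its orbit meets an Overflow rule, a Halt rule or an
empty state before a second Halve rule. -/
lemma one_le_ell (E : State) (h : WeaklyEmbanked E) : 1 ≤ ell E := by
  obtain ⟨hE, j₁, j₂, h0, h12, -, hr1, hr2, hinc⟩ := h
  by_contra hl
  have hR : ∀ t, 0 < t → t ≤ j₂ →
      ruleOf (P^[t] E) = .increment ∨ ruleOf (P^[t] E) = .halve := by
    intro t ht ht2
    by_cases e1 : t = j₁
    · exact Or.inr (e1 ▸ hr1)
    by_cases e2 : t = j₂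
    · exact Or.inr (e2 ▸ hr2)
    exact Or.inl (hinc t ht (by omega) e1)
  have hev := empty_even E hE
  have hz := empty_rule E hE
  match E, hE.1 with
  | x :: y :: L, _ => simp [ell] at hl
  | [a], _ =>
    have ha : Even a := hev a (by simp)
    have ha' : ¬ Even (a + 1) := by grind
    have ha'' : ¬ Even (a - 1) := by grind
    have p1 : P^[1] [a] = [a + 1, 0, 0] := by
      simp [P, hz, leftmost]
    by_cases h2 : a = -2
    · have r1 : ruleOf [a + 1, 0, 0] = .halve := by
        simp [ruleOf, OverflowCond, HaltCond, ZeroCond, leftmost, h2]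
      have p2 : P^[2] [a] = [0, 0] := by
        rw [Function.iterate_succ_apply', p1, P, r1]; rfl
      have r2 : ruleOf [0, 0] = .halt := by
        simp [ruleOf, OverflowCond, HaltCond, leftmost]
      have := hR 2 (by omega) (by omega)
      simp [p2, r2] at this
    have r1 : ruleOf [a + 1, 0, 0] = .increment := by
      simp [ruleOf, OverflowCond, HaltCond, ZeroCond, leftmost, ha']
      omega
    have n1 : j₁ ≠ 1 := by rintro rfl; rw [p1, r1] at hr1; cases hr1
    have p2 : P^[2] [a] = [a, 1, 0] := by
      rw [Function.iterate_succ_apply', p1, P, r1]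
      have : (a + 1) % 2 = 1 := by grind
      simp [List.findIdx_cons, this]
    have r2 : ruleOf [a, 1, 0] = .increment := by
      simp [ruleOf, OverflowCond, HaltCond, ZeroCond, leftmost]
      grind
    have n2 : j₁ ≠ 2 := by rintro rfl; rw [p2, r2] at hr1; cases hr1
    have p3 : P^[3] [a] = [a - 1, 1, 1] := by
      rw [Function.iterate_succ_apply', p2, P, r2]
      have : a % 2 = 0 := by grind
      simp [List.findIdx_cons, this]
    by_cases h3 : a = 0
    · have r3 : ruleOf [a - 1, 1, 1] = .halve := by
        simp [ruleOf, OverflowCond, HaltCond, ZeroCond, leftmost, h3]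
      have p4 : P^[4] [a] = [1, 1] := by
        rw [Function.iterate_succ_apply', p3, P, r3]; rfl
      have r4 : ruleOf [1, 1] = .increment := by
        simp [ruleOf, OverflowCond, HaltCond, ZeroCond, leftmost]
      have p5 : P^[5] [a] = [0, 2] := by
        rw [Function.iterate_succ_apply', p4, P, r4]
        simp [List.findIdx_cons]
      have r5 : ruleOf [0, 2] = .zero := by
        simp [ruleOf, OverflowCond, HaltCond, ZeroCond, leftmost]
      have n4 : j₂ ≠ 4 := by rintro rfl; rw [p4, r4] at hr2; cases hr2
      have := hR 5 (by omega) (by omega)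
      simp [p5, r5] at this
    · have r3 : ruleOf [a - 1, 1, 1] = .increment := by
        simp [ruleOf, OverflowCond, HaltCond, ZeroCond, leftmost, h3]
      have p4 : P^[4] [a] = [a - 2, 2, 1] := by
        rw [Function.iterate_succ_apply', p3, P, r3]
        have : (a - 1) % 2 = 1 := by grind
        simp [List.findIdx_cons, this]
        ring
      have r4 : ruleOf [a - 2, 2, 1] = .overflow := by
        have : Even (a - 2) := by grind
        simp [ruleOf, OverflowCond, leftmost, this]
      have := hR 4 (by omega) (by omega)
      simp [p4, r4] at this

/-- The data of the orbit of a weakly embanked state around its first two Halve rules. -/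
lemma weaklyEmbanked_values (E : State) (h : WeaklyEmbanked E) :
    (sVal E 1 : ℤ) = 2 ^ ell E - 1 - entry E 0 ∧
    hVal E 1 = sVal E 1 / 2 ∧
    (sVal E 2 : ℤ) = hVal E 1 + entry E 0 / 2 + entry E 1 + 1 + (if ell E = 1 then 1 else 0) ∧
    hVal E 2 = sVal E 2 / 2 := by
  have hl := one_le_ell E h
  obtain ⟨hE, j₁, j₂, h0, h12, -, hr1, hr2, hinc⟩ := h
  obtain ⟨z0, z1, z2, z3⟩ := zero_step E hE hl
  have hzr := empty_rule E hE
  have hev : Even (entry E 0) := by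
    refine empty_even E hE _ ?_
    match E, hE.1 with
    | a :: L, _ => simp [entry]
  -- The first two Halve rules of the orbit occur at the times `j₁` and `j₂`.
  have hn1 : Nat.nth (fun j => ruleOf (P^[j] E) = Rule.halve) 0 = j₁ := by
    have hc : Nat.count (fun j => ruleOf (P^[j] E) = Rule.halve) j₁ = 0 := by
      rw [Nat.count_eq_card_filter_range, Finset.card_eq_zero, Finset.filter_eq_empty_iff]
      intro t ht
      rw [Finset.mem_range] at ht
      rcases Nat.eq_zero_or_pos t with rfl | h
      · simp [hzr]
      · simp [hinc t h (by omega) (by omega)]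
    rw [← hc]
    exact Nat.nth_count (p := fun j => ruleOf (P^[j] E) = Rule.halve) hr1
  have hn2 : Nat.nth (fun j => ruleOf (P^[j] E) = Rule.halve) 1 = j₂ := by
    have hc : Nat.count (fun j => ruleOf (P^[j] E) = Rule.halve) j₂ = 1 := by
      rw [Nat.count_eq_card_filter_range, Finset.card_eq_one]
      refine ⟨j₁, ?_⟩
      ext t
      rw [Finset.mem_filter, Finset.mem_range, Finset.mem_singleton]
      refine ⟨fun ⟨ht, hr⟩ => ?_, fun e => e ▸ ⟨h12, hr1⟩⟩
      by_contra hne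
      rcases Nat.eq_zero_or_pos t with rfl | h
      · simp [hzr] at hr
      · simp [hinc t h ht hne] at hr
    rw [← hc]
    exact Nat.nth_count (p := fun j => ruleOf (P^[j] E) = Rule.halve) hr2
  -- Between the Zero rule and the first Halve rule `σ = -1` and `n` decreases.
  have phase1 : ∀ t, t < j₁ → entry (P^[t + 1] E) 0 = entry E 0 - 1 - t ∧
      Even (P^[t + 1] E).sum ∧ (nOf (P^[t + 1] E) : ℤ) = 2 ^ ell E - 1 - t ∧
      entry (P^[t + 1] E) 1
        = entry E 1 + (if ell E = 1 then 1 else 0) + ((t + 1) / 2 : ℕ) := by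
    intro t
    induction t with
    | zero => intro _; simpa using ⟨z0, z1, z2, z3⟩
    | succ t ih =>
      intro ht
      obtain ⟨i0, i1, i2, i3⟩ := ih (by omega)
      obtain ⟨k0, k1, k2, k3⟩ := increment_step _ (hinc (t + 1) (by omega) (by omega) (by omega))
      rw [← Function.iterate_succ_apply' P] at k0 k1 k2 k3
      rw [k0, k1, k2, k3, i0, i2, i3]
      have := Int.even_iff.1 i1
      refine ⟨by push_cast; ring, i1, by rw [this]; push_cast; ring, ?_⟩
      rw [add_assoc]
      congr 1
      have := Int.even_iff.1 hev
      push_cast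
      omega
  obtain ⟨i0, i1, i2, i3⟩ := phase1 (j₁ - 1) (by omega)
  rw [show j₁ - 1 + 1 = j₁ by omega] at i0 i1 i2 i3
  obtain ⟨k0, k1, k2, k3⟩ := halve_step _ hr1
  rw [← Function.iterate_succ_apply' P] at k1 k2 k3
  -- Between the two Halve rules `σ = +1` and `n` increases.
  have phase2 : ∀ t, j₁ + 1 + t ≤ j₂ → entry (P^[j₁ + 1 + t] E) 0 = entry (P^[j₁] E) 1 - t ∧
      Odd (P^[j₁ + 1 + t] E).sum ∧
      (nOf (P^[j₁ + 1 + t] E) : ℤ) = nOf (P^[j₁ + 1] E) + t := by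
    intro t
    induction t with
    | zero =>
      intro _
      refine ⟨by simpa using k1, ?_, by simp⟩
      rw [add_zero, k2]; exact i1.add_one
    | succ t ih =>
      intro ht
      obtain ⟨i0, i1, i2⟩ := ih (by omega)
      obtain ⟨k0, k1, k2, -⟩ :=
        increment_step _ (hinc (j₁ + 1 + t) (by omega) (by omega) (by omega))
      rw [← Function.iterate_succ_apply' P] at k0 k1 k2
      rw [← add_assoc, k0, k1, k2, i0, i2]
      have := Int.odd_iff.1 i1
      exact ⟨by push_cast; ring, i1, by rw [this]; push_cast; ring⟩
  obtain ⟨l0, -, l2⟩ := phase2 (j₂ - (j₁ + 1)) (by omega)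
  rw [show j₁ + 1 + (j₂ - (j₁ + 1)) = j₂ by omega] at l0 l2
  obtain ⟨m0, -, -, m3⟩ := halve_step _ hr2
  rw [← Function.iterate_succ_apply' P] at m3
  have := Int.even_iff.1 hev
  simp only [sVal, hVal, Nat.sub_self, hn1, show 2 - 1 = 1 from rfl, hn2]
  refine ⟨by rw [i2]; omega, k3, ?_, m3⟩
  rw [l2]
  omega

lemma Embanked.weakly {E : State} (h : Embanked E) : WeaklyEmbanked E := by
  obtain ⟨hE, m, j₁, j₂, hm, h0, h12, h2m, hr1, hr2, hinc⟩ := h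
  exact ⟨hE, j₁, j₂, h0, h12, fun t h0 ht => hm.2.2 t h0 (by omega), hr1, hr2,
    fun t h0 ht hne => hinc t h0 (by omega) hne (by omega)⟩


/-- Let `E` be an embanked state with `h(E) = (h₁, h₂)`, `s(E) = (s₁, s₂)`,
and `i ∈ [0, ℓ]` such that `E[i]` is weakly embanked.  Then
`h(E[i])` is `(h₁-1, h₂)`, `(h₁, h₂+1)`, `(h₁, h₂)` according as `i = 0`, `i = 1`, `i ≥ 2`;
and `s(E[i])` is `(s₁-2, s₂)`, `(s₁, s₂+2)`, `(s₁, s₂)` accordingly. -/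
theorem statement_8 (E : State) (i : ℕ) (h₁ h₂ s₁ s₂ : ℕ)
    (hE : Embanked E)
    (hh₁ : hVal E 1 = h₁) (hh₂ : hVal E 2 = h₂)
    (hs₁ : sVal E 1 = s₁) (hs₂ : sVal E 2 = s₂)
    (hi : i ≤ ell E) (hw : WeaklyEmbanked (bump E i)) :
    (i = 0 → (hVal (bump E i) 1 : ℤ) = (h₁ : ℤ) - 1 ∧ hVal (bump E i) 2 = h₂ ∧
      (sVal (bump E i) 1 : ℤ) = (s₁ : ℤ) - 2 ∧ sVal (bump E i) 2 = s₂) ∧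
    (i = 1 → hVal (bump E i) 1 = h₁ ∧ hVal (bump E i) 2 = h₂ + 1 ∧
      sVal (bump E i) 1 = s₁ ∧ sVal (bump E i) 2 = s₂ + 2) ∧
    (2 ≤ i → hVal (bump E i) 1 = h₁ ∧ hVal (bump E i) 2 = h₂ ∧
      sVal (bump E i) 1 = s₁ ∧ sVal (bump E i) 2 = s₂) := by
  subst hh₁ hh₂ hs₁ hs₂
  obtain ⟨a1, a2, a3, a4⟩ := weaklyEmbanked_values E hE.weakly
  obtain ⟨b1, b2, b3, b4⟩ := weaklyEmbanked_values _ hw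
  have hl := one_le_ell E hE.weakly
  have hlen : ell (bump E i) = ell E := by simp [ell, bump]
  have hE2 : 2 ≤ E.length := by unfold ell at hl; omega
  have e0 : entry (bump E i) 0 = entry E 0 + if i = 0 then 2 else 0 := by
    match E, hE2 with
    | x :: y :: L, _ => rcases i with _ | i <;> simp [entry, bump]
  have e1 : entry (bump E i) 1 = entry E 1 + if i = 1 then 2 else 0 := by
    match E, hE2 with
    | x :: y :: L, _ => rcases i with _ | _ | i <;> simp [entry, bump]
  rw [hlen, e0] at b1 b3
  rw [e1] at b3
  -- Since `ℓ ≥ 1`, the power `2 ^ ℓ` is even.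
  obtain ⟨p, hp⟩ : ∃ p : ℤ, (2 : ℤ) ^ ell E = 2 * p :=
    ⟨2 ^ (ell E - 1), by rw [← pow_succ']; congr 1; omega⟩
  rw [hp] at a1 b1
  refine ⟨?_, ?_, ?_⟩
  · rintro rfl
    simp only [if_true, zero_ne_one, if_false] at b1 b3
    omega
  · rintro rfl
    simp only [if_true, one_ne_zero, if_false] at b1 b3
    have : sVal (bump E 1) 1 = sVal E 1 := by omega
    omega
  · intro h2
    simp only [show i ≠ 0 by omega, show i ≠ 1 by omega, if_false] at b1 b3
    have : sVal (bump E i) 1 = sVal E 1 := by omega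
    omega

end Skelet17
end
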